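/- arXiv:2407.02332 — 7 statements merged into one kernel-verified Lean document; each statement's English description precedes it below -/
import Mathlib

section
/- Let N ≥ 1 and let u₀ ∈ C⁰(ℝ^N) ∩ L¹(ℝ^N) satisfy u₀ ≥ 0 and ∫_{ℝ^N} u₀ dL^N = 1, and let U(t,·) = H_t u₀ be its heat flow. Then for every t > 0 one has U(t,x) > 0 for all x, and for all x, v ∈ ℝ^N, Hess(log U(t,·))(x)(v,v) ≥ -|v|²/(2t). -/
open MeasureTheory Filter Metric
open scoped ENNReal NNReal Topology

noncomputable section

/-- Euclidean space `ℝ^N`. -/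
abbrev E (N : ℕ) : Type := EuclideanSpace ℝ (Fin N)

/-- The Euclidean heat kernel `H(t,x,y) = (4πt)^{-N/2} exp(-|x-y|²/(4t))`. -/
def heatKernel (N : ℕ) (t : ℝ) (x y : E N) : ℝ :=
  (4 * Real.pi * t) ^ (-(N : ℝ) / 2) * Real.exp (-‖x - y‖ ^ 2 / (4 * t))

/-- The heat flow `(H_t u₀)(x) = ∫ u₀(y) H(t,x,y) dy`, with `H_0 u₀ = u₀`. -/
def heatFlow (N : ℕ) (u₀ : E N → ℝ) (t : ℝ) (x : E N) : ℝ :=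
  if t = 0 then u₀ x else ∫ y, u₀ y * heatKernel N t x y

/-- `VT N T u` means `u ∈ 𝒱𝒯₁⁺(T)`: `u` is `C²`, in `L¹`, positive, of unit mass, and
`2T·Hess(log u)(x)(v,v) + |v|² ≥ 0` for all `x, v`. -/
def VT (N : ℕ) (T : ℝ) (u : E N → ℝ) : Prop :=
  ContDiff ℝ 2 u ∧ Integrable u volume ∧ (∀ x, 0 < u x) ∧ (∫ x, u x) = 1 ∧
    ∀ x v : E N,
      0 ≤ 2 * T * iteratedFDeriv ℝ 2 (fun y => Real.log (u y)) x ![v, v] + ‖v‖ ^ 2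

/-- The Colding–Minicozzi entropy `λ_CM^n[μ]`. -/
def lamCM {N : ℕ} (n : ℕ) (μ : Measure (E N)) : ℝ≥0∞ :=
  ⨆ (ρ : ℝ) (_ : 0 < ρ) (x₀ : E N),
    ENNReal.ofReal ((4 * Real.pi * ρ) ^ (-(n : ℝ) / 2)) *
      ∫⁻ x, ENNReal.ofReal (Real.exp (-‖x - x₀‖ ^ 2 / (4 * ρ))) ∂μ

/-- The virtual entropy `λ_V^n[μ]`. -/
def lamV {N : ℕ} (n : ℕ) (μ : Measure (E N)) : ℝ≥0∞ :=
  ⨆ (T : ℝ) (_ : 0 < T) (u : E N → ℝ) (_ : VT N T u),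
    ENNReal.ofReal ((4 * Real.pi * T) ^ (((N : ℝ) - n) / 2)) *
      ∫⁻ x, ENNReal.ofReal (u x) ∂μ

/-- The Li–Yau weight `W^M_ρ`, expressed as a function of the squared norm `r2 = |x|²`:
`W^M_ρ(x) = ρ^M (1 + ρ²|x|²/4)^{-M}`. -/
def W (M : ℕ) (ρ r2 : ℝ) : ℝ := ρ ^ M / (1 + ρ ^ 2 * r2 / 4) ^ M

/-- The Li–Yau conformal volume `λ_LY^k[μ]`. -/
def lamLY {N : ℕ} (k : ℕ) (μ : Measure (E N)) : ℝ≥0∞ :=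
  ⨆ (ρ : ℝ) (_ : 0 < ρ) (x₀ : E N), ∫⁻ x, ENNReal.ofReal (W k ρ (‖x - x₀‖ ^ 2)) ∂μ

/-- The `k`-dimensional volume `|𝕊^k|` of the unit `k`-sphere, as the `k`-dimensional
Hausdorff measure of the unit sphere in `ℝ^{k+1}`. -/
def sphereVol (k : ℕ) : ℝ :=
  (μH[(k : ℝ)] (Metric.sphere (0 : EuclideanSpace ℝ (Fin (k + 1))) 1)).toReal

/-- The normalized Li–Yau conformal volume `λ̄_LY^k[μ] = |𝕊^k|⁻¹ λ_LY^k[μ]`. -/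
def lamLYbar {N : ℕ} (k : ℕ) (μ : Measure (E N)) : ℝ≥0∞ :=
  ENNReal.ofReal ((sphereVol k)⁻¹) * lamLY k μ

/-- The Li–Yau conformal volume `λ_LY^k[μ ⊗ L^{2m}]` of the product of `μ` with Lebesgue
measure on `ℝ^{2m}` (the squared Euclidean norm on `ℝ^{N+2m}` of `(y,z)-(y₀,z₀)` is
`|y-y₀|² + |z-z₀|²`). -/
def lamLYProd {N : ℕ} (k : ℕ) (μ : Measure (E N)) (m : ℕ) : ℝ≥0∞ :=
  ⨆ (ρ : ℝ) (_ : 0 < ρ) (y₀ : E N) (z₀ : E (2 * m)),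
    ∫⁻ p : E N × E (2 * m),
      ENNReal.ofReal (W k ρ (‖p.1 - y₀‖ ^ 2 + ‖p.2 - z₀‖ ^ 2)) ∂(μ.prod volume)

/-- The normalized Li–Yau conformal volume `λ̄_LY^k[μ ⊗ L^{2m}]`. -/
def lamLYbarProd {N : ℕ} (k : ℕ) (μ : Measure (E N)) (m : ℕ) : ℝ≥0∞ :=
  ENNReal.ofReal ((sphereVol k)⁻¹) * lamLYProd k μ m

/-- The constant `C_{M,m} = (4π)^m (M+m-1)!/(M+2m-1)!`. -/
def Cconst (M m : ℕ) : ℝ :=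
  (4 * Real.pi) ^ m * (Nat.factorial (M + m - 1) : ℝ) / (Nat.factorial (M + 2 * m - 1) : ℝ)

/-- The modified weight `Ŵ^n_{M,ρ}(x) = (4πρ)^{-n/2} (1 + |x|²/(4Mρ))^{-M}`, as a function
of the squared norm `r2 = |x|²`. -/
def What (n M : ℕ) (ρ r2 : ℝ) : ℝ :=
  (4 * Real.pi * ρ) ^ (-(n : ℝ) / 2) / (1 + r2 / (4 * (M : ℝ) * ρ)) ^ M

/-- The constant `Ĉ_{n,m} = (4π/(n+m))^{n/2} |𝕊^{n+2m}|⁻¹ C_{n,m}`. -/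
def Chat (n m : ℕ) : ℝ :=
  (4 * Real.pi / ((n : ℝ) + m)) ^ ((n : ℝ) / 2) * (sphereVol (n + 2 * m))⁻¹ * Cconst n m

lemma hk_nonneg (N : ℕ) (t : ℝ) (ht : 0 < t) (x y : E N) : 0 < heatKernel N t x y := by
  unfold heatKernel
  have := Real.pi_pos
  positivity

lemma hk_cont (N : ℕ) (t : ℝ) (x : E N) : Continuous (fun y => heatKernel N t x y) := by
  unfold heatKernel
  fun_prop

lemma hk_int (N : ℕ) (u₀ : E N → ℝ) (hint : Integrable u₀ volume) (t : ℝ) (ht : 0 < t) (x : E N) :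
    Integrable (fun y => u₀ y * heatKernel N t x y) volume := by
  refine hint.mul_bdd (c := (4 * Real.pi * t) ^ (-(N : ℝ) / 2)) (hk_cont N t x).aestronglyMeasurable
    (ae_of_all _ fun y => ?_)
  rw [Real.norm_of_nonneg (hk_nonneg N t ht x y).le]
  unfold heatKernel
  have := Real.pi_pos
  refine mul_le_of_le_one_right (by positivity) ?_
  rw [Real.exp_le_one_iff, neg_div]
  have : 0 ≤ ‖x - y‖ ^ 2 / (4 * t) := by positivity
  linarith

lemma hf_pos (N : ℕ) (u₀ : E N → ℝ)
    (hint : Integrable u₀ volume)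
    (hnonneg : ∀ x, 0 ≤ u₀ x) (hmass : (∫ x, u₀ x) = 1)
    (t : ℝ) (ht : 0 < t) (x : E N) : 0 < heatFlow N u₀ t x := by
  unfold heatFlow
  rw [if_neg ht.ne', integral_pos_iff_support_of_nonneg
    (fun y => mul_nonneg (hnonneg y) (hk_nonneg N t ht x y).le) (hk_int N u₀ hint t ht x)]
  have h1 : 0 < ∫ y, u₀ y := by rw [hmass]; norm_num
  rw [integral_pos_iff_support_of_nonneg hnonneg hint] at h1
  convert h1 using 2
  ext y
  simp [(hk_nonneg N t ht x y).ne']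

lemma hf_diff (N : ℕ) (u₀ : E N → ℝ) (hint : Integrable u₀ volume)
    (t : ℝ) (ht : 0 < t) : Differentiable ℝ (heatFlow N u₀ t) := by
  intro x
  have e : heatFlow N u₀ t = fun x => ∫ y, u₀ y * heatKernel N t x y := by
    ext x; simp [heatFlow, ht.ne']
  rw [e]
  set c : ℝ := (4 * Real.pi * t) ^ (-(N : ℝ) / 2) with hc
  have hc0 : 0 ≤ c := by have := Real.pi_pos; positivity
  let F' : E N → E N → (E N →L[ℝ] ℝ) := fun x y =>
    (u₀ y * (heatKernel N t x y * (-2 / (4 * t)))) • innerSL ℝ (x - y)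
  refine (hasFDerivAt_integral_of_dominated_of_fderiv_le (F' := F') (s := Set.univ)
    (bound := fun y => ‖u₀ y‖ * (c * ((1 + 4 * t) * (2 / (4 * t))))) Filter.univ_mem ?_
    (hk_int N u₀ hint t ht x) ?_ ?_ ?_ ?_).differentiableAt
  · exact Filter.Eventually.of_forall fun z => (hk_int N u₀ hint t ht z).aestronglyMeasurable
  · refine AEStronglyMeasurable.smul (hint.aestronglyMeasurable.mul
      ((hk_cont N t x).mul continuous_const).aestronglyMeasurable) ?_
    exact ((innerSL ℝ).continuous.comp (continuous_const.sub continuous_id)).aestronglyMeasurable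
  · refine ae_of_all _ fun y z _ => ?_
    simp only [F', norm_smul, norm_mul, innerSL_apply_norm, mul_assoc]
    refine mul_le_mul_of_nonneg_left ?_ (norm_nonneg _)
    rw [Real.norm_of_nonneg (hk_nonneg N t ht z y).le]
    have h2 : ‖-2 / (4 * t)‖ = 2 / (4 * t) := by
      rw [neg_div, norm_neg, Real.norm_of_nonneg (by positivity)]
    rw [h2]
    unfold heatKernel
    rw [← hc, mul_assoc]
    refine mul_le_mul_of_nonneg_left ?_ hc0
    set r := ‖z - y‖
    rw [neg_div, Real.exp_neg, mul_comm (2 / (4 * t)), ← mul_assoc]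
    refine mul_le_mul_of_nonneg_right ?_ (by positivity)
    rw [inv_mul_le_iff₀ (Real.exp_pos _)]
    have h3 := Real.add_one_le_exp (r ^ 2 / (4 * t))
    have h4 : r ^ 2 = (4 * t) * (r ^ 2 / (4 * t)) := by field_simp
    have h5 : 0 ≤ r ^ 2 / (4 * t) := by positivity
    generalize r ^ 2 / (4 * t) = q at *
    nlinarith [sq_nonneg (r - 1)]
  · exact hint.norm.mul_const _
  · refine ae_of_all _ fun y z _ => ?_
    have h0 : HasFDerivAt (fun z : E N => z - y) (ContinuousLinearMap.id ℝ (E N)) z :=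
      (hasFDerivAt_id z).sub_const y
    have h1 := (((h0.norm_sq.neg).mul_const ((4 * t)⁻¹)).exp.const_mul c).const_mul (u₀ y)
    simp only [heatKernel, div_eq_mul_inv, F']
    simp only [hc, div_eq_mul_inv] at h1
    refine h1.congr_fderiv ?_
    ext w
    simp
    ring

lemma cgf_eq (N : ℕ) (u₀ : E N → ℝ) (hcont : Continuous u₀)
    (hint : Integrable u₀ volume)
    (hnonneg : ∀ x, 0 ≤ u₀ x) (hmass : (∫ x, u₀ x) = 1)
    (t : ℝ) (ht : 0 < t) (x v : E N) :
    ∃ (μ : Measure (E N)) (X : E N → ℝ), ProbabilityTheory.integrableExpSet X μ = Set.univ ∧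
      ∀ s : ℝ, ProbabilityTheory.cgf X μ s =
        Real.log (heatFlow N u₀ t (x + s • v)) + s ^ 2 * (‖v‖ ^ 2 / (4 * t)) := by
  let d : E N → ℝ≥0 := fun y => Real.toNNReal (u₀ y * heatKernel N t x y)
  have hd : Measurable d := (hcont.mul (hk_cont N t x)).measurable.real_toNNReal
  let X : E N → ℝ := fun y => inner ℝ (y - x) v / (2 * t)
  have key : ∀ (s : ℝ) (y : E N), d y • Real.exp (s * X y) =
      Real.exp (s ^ 2 * (‖v‖ ^ 2 / (4 * t))) * (u₀ y * heatKernel N t (x + s • v) y) := by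
    intro s y
    rw [NNReal.smul_def, smul_eq_mul,
      Real.coe_toNNReal _ (mul_nonneg (hnonneg y) (hk_nonneg N t ht x y).le)]
    unfold heatKernel
    have h1 : -‖x - y‖ ^ 2 / (4 * t) + s * X y =
        s ^ 2 * (‖v‖ ^ 2 / (4 * t)) + -‖x + s • v - y‖ ^ 2 / (4 * t) := by
      have h2 : x + s • v - y = (x - y) + s • v := by abel
      have h3 : inner ℝ (y - x) v = - inner ℝ (x - y) v := by
        rw [← inner_neg_left, neg_sub]
      rw [h2, norm_add_sq_real, inner_smul_right, norm_smul, mul_pow, Real.norm_eq_abs, sq_abs]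
      simp only [X, h3]
      field_simp
      ring
    have h4 := congrArg Real.exp h1
    rw [Real.exp_add, Real.exp_add] at h4
    linear_combination (u₀ y * (4 * Real.pi * t) ^ (-(N : ℝ) / 2)) * h4
  refine ⟨volume.withDensity (fun y => (d y : ℝ≥0∞)), X, ?_, fun s => ?_⟩
  · ext s
    simp only [ProbabilityTheory.integrableExpSet, Set.mem_ofPred_eq, Set.mem_univ, iff_true]
    rw [integrable_withDensity_iff_integrable_smul hd]
    simp_rw [key]
    exact (hk_int N u₀ hint t ht _).const_mul _
  · rw [ProbabilityTheory.cgf, ProbabilityTheory.mgf, integral_withDensity_eq_integral_smul hd]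
    simp_rw [key]
    have hp := hf_pos N u₀ hint hnonneg hmass t ht (x + s • v)
    have e : heatFlow N u₀ t (x + s • v) = ∫ y, u₀ y * heatKernel N t (x + s • v) y := by
      simp [heatFlow, ht.ne']
    rw [integral_const_mul, ← e, Real.log_mul (Real.exp_pos _).ne' hp.ne', Real.log_exp, add_comm]

/-- positivity and the matrix Harnack inequality
`Hess(log U(t,·))(x)(v,v) ≥ -|v|²/(2t)` for the heat flow of nonnegative, continuous,
integrable initial data of unit mass. -/
theorem statement_0 (N : ℕ) (hN : 1 ≤ N) (u₀ : E N → ℝ)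
    (hcont : Continuous u₀) (hint : Integrable u₀ volume)
    (hnonneg : ∀ x, 0 ≤ u₀ x) (hmass : (∫ x, u₀ x) = 1)
    (t : ℝ) (ht : 0 < t) :
    (∀ x, 0 < heatFlow N u₀ t x) ∧
      ∀ x v : E N,
        -‖v‖ ^ 2 / (2 * t) ≤
          iteratedFDeriv ℝ 2 (fun y => Real.log (heatFlow N u₀ t y)) x ![v, v] := by
  have hpos := hf_pos N u₀ hint hnonneg hmass t ht
  refine ⟨hpos, fun x v => ?_⟩
  set f : E N → ℝ := fun y => Real.log (heatFlow N u₀ t y) with hf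
  rw [iteratedFDeriv_two_apply]
  simp only [Matrix.cons_val_zero, Matrix.cons_val_one]
  by_cases hD : DifferentiableAt ℝ (fderiv ℝ f) x
  swap
  · rw [fderiv_zero_of_not_differentiableAt hD, neg_div]
    have : 0 ≤ ‖v‖ ^ 2 / (2 * t) := by positivity
    simpa using this
  have hfd : Differentiable ℝ f := (hf_diff N u₀ hint t ht).log fun y => (hpos y).ne'
  obtain ⟨μ, X, hX, hc⟩ := cgf_eq N u₀ hcont hint hnonneg hmass t ht x v
  have hline : ∀ s : ℝ, HasDerivAt (fun s : ℝ => x + s • v) v s := fun s => by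
    simpa using ((hasDerivAt_id s).smul_const v).const_add x
  have h1 : deriv (ProbabilityTheory.cgf X μ) =
      fun s => fderiv ℝ f (x + s • v) v + 2 * s * (‖v‖ ^ 2 / (4 * t)) := by
    ext s
    have e : ProbabilityTheory.cgf X μ = fun s =>
      f (x + s • v) + s ^ 2 * (‖v‖ ^ 2 / (4 * t)) := funext hc
    rw [e]
    have a := (hfd (x + s • v)).hasFDerivAt.comp_hasDerivAt s (hline s)
    have b := ((hasDerivAt_pow 2 s).mul_const (‖v‖ ^ 2 / (4 * t)))
    have ab : HasDerivAt (fun s => f (x + s • v) + s ^ 2 * (‖v‖ ^ 2 / (4 * t))) _ s := a.add b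
    rw [ab.deriv]
    simp
  have h2 : iteratedDeriv 2 (ProbabilityTheory.cgf X μ) 0 =
      fderiv ℝ (fderiv ℝ f) x v v + 2 * (‖v‖ ^ 2 / (4 * t)) := by
    rw [iteratedDeriv_succ, iteratedDeriv_one, h1]
    have hD' : HasFDerivAt (fderiv ℝ f) (fderiv ℝ (fderiv ℝ f) x) (x + (0 : ℝ) • v) := by
      simpa using hD.hasFDerivAt
    have a := hD'.comp_hasDerivAt (0 : ℝ) (hline 0)
    have a1 := (ContinuousLinearMap.apply ℝ ℝ v).hasFDerivAt.comp_hasDerivAt (0 : ℝ) a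
    have a2 : HasDerivAt (fun s : ℝ => fderiv ℝ f (x + s • v) v)
        (fderiv ℝ (fderiv ℝ f) x v v) 0 := a1
    have b : HasDerivAt (fun s : ℝ => 2 * s * (‖v‖ ^ 2 / (4 * t))) (2 * 1 * (‖v‖ ^ 2 / (4 * t))) 0 :=
      ((hasDerivAt_id (0 : ℝ)).const_mul 2).mul_const (‖v‖ ^ 2 / (4 * t))
    rw [(a2.fun_add b).deriv, mul_one]
  have h3 : 0 ≤ iteratedDeriv 2 (ProbabilityTheory.cgf X μ) 0 := by
    rw [ProbabilityTheory.iteratedDeriv_two_cgf_eq_integral (by simp [hX])]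
    exact div_nonneg (integral_nonneg fun y => by positivity) ProbabilityTheory.mgf_nonneg
  rw [h2] at h3
  have h4 : -‖v‖ ^ 2 / (2 * t) = -(2 * (‖v‖ ^ 2 / (4 * t))) := by field_simp; ring
  rw [h4]
  linarith
end
end

section
/- Let T > 0 and u ∈ VT₁⁺(T). Then u(x) → 0 as |x| → ∞, and there exists a point z₀ ∈ ℝ^N such that for all x ∈ ℝ^N, 0 < u(z₀) exp(-|x-z₀|²/(4T)) ≤ u(x) ≤ u(z₀) ≤ (4πT)^{-N/2}. -/
open MeasureTheory Filter Metric
open scoped ENNReal NNReal Topology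

noncomputable section

lemma aux_convex {N : ℕ} {T : ℝ} (hT : 0 < T) {u : E N → ℝ} (hu : VT N T u) (x v : E N) :
    ConvexOn ℝ Set.univ
      (fun t : ℝ => Real.log (u (x + t • v)) + t ^ 2 * (‖v‖ ^ 2 / (4 * T))) := by
  obtain ⟨hc, -, hpos, -, hH⟩ := hu
  set L : E N → ℝ := fun y => Real.log (u y) with hL
  have hLc : ContDiff ℝ 2 L := hc.log (fun y => (hpos y).ne')
  have hl : ∀ t : ℝ, HasDerivAt (fun t : ℝ => x + t • v) v t := by
    intro t
    simpa using ((hasDerivAt_id t).smul_const v).const_add x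
  have hd1 : Differentiable ℝ L := hLc.differentiable (by norm_num)
  have hd2 : Differentiable ℝ (fderiv ℝ L) :=
    (hLc.fderiv_right (m := 1) (by norm_num)).differentiable (by norm_num)
  have h1 : ∀ t : ℝ, HasDerivAt
      (fun t : ℝ => L (x + t • v) + t ^ 2 * (‖v‖ ^ 2 / (4 * T)))
      (fderiv ℝ L (x + t • v) v + (2 * t) * (‖v‖ ^ 2 / (4 * T))) t := by
    intro t
    have ha := (hd1 (x + t • v)).hasFDerivAt.comp_hasDerivAt t (hl t)
    have hb := (hasDerivAt_pow 2 t).mul_const (‖v‖ ^ 2 / (4 * T))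
    refine (ha.add hb).congr_deriv ?_
    simp
  have h2 : ∀ t : ℝ, HasDerivAt
      (fun t : ℝ => fderiv ℝ L (x + t • v) v + (2 * t) * (‖v‖ ^ 2 / (4 * T)))
      (fderiv ℝ (fderiv ℝ L) (x + t • v) v v + 2 * (‖v‖ ^ 2 / (4 * T))) t := by
    intro t
    have ha := (hd2 (x + t • v)).hasFDerivAt.comp_hasDerivAt t (hl t)
    have ha' := ha.clm_apply (hasDerivAt_const t v)
    have hb := ((hasDerivAt_id t).const_mul 2).mul_const (‖v‖ ^ 2 / (4 * T))
    refine (ha'.add hb).congr_deriv ?_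
    simp
  refine convexOn_of_hasDerivWithinAt2_nonneg convex_univ
    (fun t _ => (h1 t).continuousAt.continuousWithinAt)
    (fun t _ => (h1 t).hasDerivWithinAt) (fun t _ => (h2 t).hasDerivWithinAt) ?_
  intro t _
  have h := hH (x + t • v) v
  rw [iteratedFDeriv_two_apply] at h
  simp only [Matrix.cons_val_zero, Matrix.cons_val_one] at h
  have h3 : fderiv ℝ (fderiv ℝ L) (x + t • v) v v + 2 * (‖v‖ ^ 2 / (4 * T))
      = (2 * T * fderiv ℝ (fderiv ℝ L) (x + t • v) v v + ‖v‖ ^ 2) / (2 * T) := by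
    field_simp
    ring
  rw [h3]
  exact div_nonneg h (by positivity)

lemma aux_mid {N : ℕ} {T : ℝ} (hT : 0 < T) {u : E N → ℝ} (hu : VT N T u) (x h : E N) :
    2 * (u x * Real.exp (-‖h‖ ^ 2 / (4 * T))) ≤ u (x + h) + u (x - h) := by
  have hpos := hu.2.2.1
  have hc := (aux_convex hT hu x h).2 (Set.mem_univ (-1)) (Set.mem_univ 1)
    (show (0 : ℝ) ≤ 1 / 2 by norm_num) (show (0 : ℝ) ≤ 1 / 2 by norm_num) (by norm_num)
  norm_num [← sub_eq_add_neg] at hc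
  set a := Real.log (u (x + h)) with ha
  set b := Real.log (u (x - h)) with hb
  have ea : u (x + h) = Real.exp (a / 2) ^ 2 := by
    rw [← Real.exp_nat_mul, ha]
    rw [show ((2 : ℕ) : ℝ) * (Real.log (u (x + h)) / 2) = Real.log (u (x + h)) by push_cast; ring,
      Real.exp_log (hpos _)]
  have eb : u (x - h) = Real.exp (b / 2) ^ 2 := by
    rw [← Real.exp_nat_mul, hb]
    rw [show ((2 : ℕ) : ℝ) * (Real.log (u (x - h)) / 2) = Real.log (u (x - h)) by push_cast; ring,
      Real.exp_log (hpos _)]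
  have hle : u x * Real.exp (-‖h‖ ^ 2 / (4 * T)) ≤ Real.exp (a / 2) * Real.exp (b / 2) := by
    rw [← Real.exp_log (hpos x), ← Real.exp_add, ← Real.exp_add]
    apply Real.exp_le_exp.2
    rw [neg_div]
    linarith
  rw [ea, eb]
  nlinarith [sq_nonneg (Real.exp (a / 2) - Real.exp (b / 2))]

lemma aux_bound {N : ℕ} {T : ℝ} (hT : 0 < T) {u : E N → ℝ} (hu : VT N T u) (x : E N) :
    u x ≤ (4 * Real.pi * T) ^ (-(N : ℝ) / 2) := by
  obtain ⟨-, hi, hpos, h1, -⟩ := id hu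
  have hle : ∫ h : E N, 2 * u x * Real.exp (-(1 / (4 * T)) * ‖h‖ ^ 2)
      ≤ ∫ h : E N, (u (x + h) + u (x - h)) := by
    refine integral_mono_of_nonneg (Eventually.of_forall fun h => ?_)
      ((hi.comp_add_left x).add (hi.comp_sub_left x)) (Eventually.of_forall fun h => ?_)
    · have := hpos x
      simp only [Pi.zero_apply]; positivity
    · have := aux_mid hT hu x h
      have e : -‖h‖ ^ 2 / (4 * T) = -(1 / (4 * T)) * ‖h‖ ^ 2 := by ring
      rw [e] at this
      simp only; linarith
  rw [integral_add (hi.comp_add_left x) (hi.comp_sub_left x), integral_add_left_eq_self,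
    integral_sub_left_eq_self, h1, integral_const_mul,
    GaussianFourier.integral_rexp_neg_mul_sq_norm (by positivity)] at hle
  have e2 : Real.pi / (1 / (4 * T)) = 4 * Real.pi * T := by field_simp
  rw [e2, finrank_euclideanSpace_fin] at hle
  have hp : 0 < (4 * Real.pi * T) ^ ((N : ℝ) / 2) := by positivity
  rw [neg_div, Real.rpow_neg (by positivity), ← one_div, le_div_iff₀ hp]
  linarith

open scoped Classical in
lemma aux_tendsto {N : ℕ} {T : ℝ} (hT : 0 < T) {u : E N → ℝ} (hu : VT N T u) :
    Tendsto u (cocompact (E N)) (nhds 0) := by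
  obtain ⟨-, hi, hpos, h1, -⟩ := id hu
  have hF : Tendsto (fun x : E N => ∫ y, (ball x 1).indicator u y) (cocompact (E N)) (nhds 0) := by
    rw [← cobounded_eq_cocompact, ← comap_norm_atTop]
    have : (0 : ℝ) = ∫ _ : E N, (0 : ℝ) := by simp
    rw [this]
    refine tendsto_integral_filter_of_dominated_convergence u
      (Eventually.of_forall fun x => (hi.indicator measurableSet_ball).aestronglyMeasurable)
      (Eventually.of_forall fun x => Eventually.of_forall fun y => ?_) hi
      (Eventually.of_forall fun y => ?_)
    · rw [Set.indicator_apply]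
      split_ifs
      · exact (Real.norm_of_nonneg (hpos y).le).le
      · simpa using (hpos y).le
    · have hev : ∀ᶠ x : E N in comap norm atTop, 1 + ‖y‖ ≤ ‖x‖ :=
        tendsto_comap.eventually (eventually_ge_atTop (1 + ‖y‖))
      refine tendsto_const_nhds.congr' ?_
      filter_upwards [hev] with x hx
      rw [Set.indicator_of_notMem]
      rw [mem_ball, dist_eq_norm, not_lt]
      have := norm_sub_norm_le x y
      rw [norm_sub_rev]
      linarith
  set c : ℝ := (volume : Measure (E N)).real (ball 0 1) * Real.exp (-(1 / (4 * T))) with hc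
  have hcpos : 0 < c := by
    have : 0 < (volume : Measure (E N)).real (ball 0 1) :=
      ENNReal.toReal_pos (measure_ball_pos _ _ one_pos).ne' measure_ball_lt_top.ne
    positivity
  have key : ∀ x, u x ≤ (∫ y, (ball x 1).indicator u y) / c := by
    intro x
    have hg : Integrable ((ball x 1).indicator u) := hi.indicator measurableSet_ball
    have hle : ∫ h : E N, (ball (0 : E N) 1).indicator
          (fun _ => 2 * (u x * Real.exp (-(1 / (4 * T))))) h
        ≤ ∫ h : E N, ((ball x 1).indicator u (x + h) + (ball x 1).indicator u (x - h)) := by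
      refine integral_mono_of_nonneg (Eventually.of_forall fun h => ?_)
        ((hg.comp_add_left x).add (hg.comp_sub_left x)) (Eventually.of_forall fun h => ?_)
      · have := hpos x
        exact Set.indicator_nonneg (fun _ _ => by positivity) h
      · simp only [Set.indicator_apply, mem_ball, dist_eq_norm, sub_zero, add_sub_cancel_left,
          sub_sub_cancel_left, norm_neg]
        split_ifs with hh
        · refine le_trans ?_ (aux_mid hT hu x h)
          have := hpos x
          have h2 : ‖h‖ ^ 2 ≤ 1 := by nlinarith [norm_nonneg h]
          have h3 : -(1 / (4 * T)) ≤ -‖h‖ ^ 2 / (4 * T) := by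
            rw [neg_div]
            gcongr
          gcongr
        · simp
    rw [integral_add (hg.comp_add_left x) (hg.comp_sub_left x), integral_add_left_eq_self,
      integral_sub_left_eq_self ((ball x 1).indicator u),
      integral_indicator_const _ measurableSet_ball, smul_eq_mul] at hle
    rw [le_div_iff₀ hcpos, hc]
    linarith
  refine squeeze_zero (fun x => (hpos x).le) key ?_
  simpa using hF.div_const c

lemma aux_lower {N : ℕ} {T : ℝ} (hT : 0 < T) {u : E N → ℝ} (hu : VT N T u) (z x : E N)
    (hz : ∀ y, u y ≤ u z) :
    u z * Real.exp (-‖x - z‖ ^ 2 / (4 * T)) ≤ u x := by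
  have hpos := hu.2.2.1
  set v := x - z with hv
  set k := ‖v‖ ^ 2 / (4 * T) with hk
  have hconv := aux_convex hT hu z v
  have hlim : ∀ t : ℝ, 0 < t → Real.log (u z) - k ≤ Real.log (u x) + t * k := by
    intro t ht
    have h := hconv.2 (Set.mem_univ (-t)) (Set.mem_univ 1)
      (show (0 : ℝ) ≤ 1 / (1 + t) by positivity) (show (0 : ℝ) ≤ t / (1 + t) by positivity)
      (by field_simp)
    have e0 : (1 / (1 + t)) • (-t) + (t / (1 + t)) • (1 : ℝ) = 0 := by
      simp only [smul_eq_mul]; ring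
    rw [e0] at h
    have e1 : z + (1 : ℝ) • v = x := by simp [hv]
    simp only [e1, zero_smul, add_zero, smul_eq_mul] at h
    have hl : Real.log (u (z + (-t) • v)) ≤ Real.log (u z) := Real.log_le_log (hpos _) (hz _)
    set A := Real.log (u (z + (-t) • v))
    have h' : (1 + t) * Real.log (u z) ≤ (A + t ^ 2 * k) + t * (Real.log (u x) + k) := by
      have := mul_le_mul_of_nonneg_left h (show (0 : ℝ) ≤ 1 + t by positivity)
      rw [← hk] at this
      have e : (1 + t) * (1 / (1 + t) * (A + (-t) ^ 2 * k) + t / (1 + t) * (Real.log (u x) + 1 ^ 2 * k))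
          = (A + t ^ 2 * k) + t * (Real.log (u x) + k) := by
        field_simp
      rw [e] at this
      linarith
    have h'' : t * (Real.log (u z) - k) ≤ t * (Real.log (u x) + t * k) := by nlinarith
    exact le_of_mul_le_mul_left h'' ht
  have hfin : Real.log (u z) - k ≤ Real.log (u x) := by
    have ht : Tendsto (fun t : ℝ => Real.log (u x) + t * k) (𝓝[>] 0)
        (𝓝 (Real.log (u x) + 0 * k)) := by
      apply Tendsto.mono_left _ nhdsWithin_le_nhds
      exact Continuous.tendsto (by fun_prop) 0
    rw [zero_mul, add_zero] at ht
    exact ge_of_tendsto ht (eventually_nhdsWithin_of_forall fun t ht => hlim t ht)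
  rw [neg_div, ← hk]
  calc u z * Real.exp (-k) = Real.exp (Real.log (u z) - k) := by
        rw [sub_eq_add_neg, Real.exp_add, Real.exp_log (hpos z)]
    _ ≤ Real.exp (Real.log (u x)) := Real.exp_le_exp.2 hfin
    _ = u x := Real.exp_log (hpos x)

/-- for `u ∈ 𝒱𝒯₁⁺(T)`, `u → 0` at infinity and there is `z₀` with
`0 < u(z₀) exp(-|x-z₀|²/(4T)) ≤ u(x) ≤ u(z₀) ≤ (4πT)^{-N/2}` for all `x`. -/
theorem statement_2 (N : ℕ) (T : ℝ) (hT : 0 < T) (u : E N → ℝ) (hu : VT N T u) :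
    Tendsto u (cocompact (E N)) (nhds 0) ∧
      ∃ z₀ : E N, ∀ x : E N,
        0 < u z₀ * Real.exp (-‖x - z₀‖ ^ 2 / (4 * T)) ∧
        u z₀ * Real.exp (-‖x - z₀‖ ^ 2 / (4 * T)) ≤ u x ∧
        u x ≤ u z₀ ∧
        u z₀ ≤ (4 * Real.pi * T) ^ (-(N : ℝ) / 2) := by
  have ht := aux_tendsto hT hu
  refine ⟨ht, ?_⟩
  have hpos := hu.2.2.1
  obtain ⟨z, hz⟩ := hu.1.continuous.exists_forall_ge' 0
    ((ht.eventually (gt_mem_nhds (hpos 0))).mono fun x hx => le_of_lt hx)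
  exact ⟨z, fun x => ⟨mul_pos (hpos z) (Real.exp_pos _), aux_lower hT hu z x hz, hz x,
    aux_bound hT hu z⟩⟩
end
end

section
/- For every N ≥ 1 there is a constant C₁ = C₁(N) > 0 such that for every T > 0 and every u ∈ VT₁⁺(T), the pointwise operator norm |∇²u| of the Hessian of u is Lebesgue integrable on ℝ^N and ∫_{ℝ^N} |∇²u| dL^N ≤ C₁ T^{-1}. -/
open MeasureTheory Filter Metric
open scoped ENNReal NNReal Topology

noncomputable section

lemma aux_hess {N : ℕ} {T : ℝ} (hT : 0 < T) {u : E N → ℝ} (hu : VT N T u) (x v : E N) :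
    0 ≤ fderiv ℝ (fderiv ℝ u) x v v + u x / (2 * T) * ‖v‖ ^ 2 := by
  obtain ⟨hc, -, hpos, -, hh⟩ := hu
  have h := hh x v
  have hd : Differentiable ℝ u := hc.differentiable (by norm_num)
  have hd2 : Differentiable ℝ (fderiv ℝ u) :=
    (hc.fderiv_right (m := 1) (by norm_num)).differentiable (by norm_num)
  have h1 : fderiv ℝ (fun y => Real.log (u y)) = fun y => (u y)⁻¹ • fderiv ℝ u y := by
    funext y
    exact fderiv.log (hd y) (hpos y).ne'
  have hi : HasFDerivAt (fun y => (u y)⁻¹) (-((u x) ^ 2)⁻¹ • fderiv ℝ u x) x :=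
    (hasDerivAt_inv (hpos x).ne').comp_hasFDerivAt x (hd x).hasFDerivAt
  have h2 := (hi.smul (hd2 x).hasFDerivAt).fderiv
  rw [iteratedFDeriv_two_apply, h1] at h
  have h3 : fderiv ℝ (fun y => (u y)⁻¹ • fderiv ℝ u y) x v v =
      (u x)⁻¹ * fderiv ℝ (fderiv ℝ u) x v v - ((u x)^2)⁻¹ * (fderiv ℝ u x v) ^ 2 := by
    erw [h2]
    simp
    ring
  simp only [Matrix.cons_val_zero, Matrix.cons_val_one] at h
  rw [h3] at h
  have hp := hpos x
  have h4 : (fderiv ℝ (fderiv ℝ u) x v v + u x / (2 * T) * ‖v‖ ^ 2) =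
      u x / (2 * T) * (2 * T * ((u x)⁻¹ * fderiv ℝ (fderiv ℝ u) x v v - ((u x)^2)⁻¹ * (fderiv ℝ u x v) ^ 2) + ‖v‖^2)
        + (u x)⁻¹ * (fderiv ℝ u x v) ^ 2 := by
    field_simp
    ring
  rw [h4]
  positivity

lemma aux_norm {N : ℕ} {u : E N → ℝ} (hc : ContDiff ℝ 2 u) (x : E N) (a : ℝ) (ha : 0 ≤ a)
    (h : ∀ v, 0 ≤ fderiv ℝ (fderiv ℝ u) x v v + a * ‖v‖ ^ 2) :
    ‖iteratedFDeriv ℝ 2 u x‖ ≤ (N : ℝ) * ∑ i : Fin N,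
      (fderiv ℝ (fderiv ℝ u) x (EuclideanSpace.single i 1) (EuclideanSpace.single i 1) + a) + a := by
  have hsymm : ∀ v w, fderiv ℝ (fderiv ℝ u) x v w = fderiv ℝ (fderiv ℝ u) x w v := fun v w =>
    (hc.contDiffAt (x := x)).isSymmSndFDerivAt (by simp) v w
  set B := fderiv ℝ (fderiv ℝ u) x
  set A : E N → E N → ℝ := fun v w => B v w + a * inner ℝ v w with hA
  have hAe : ∀ i : Fin N, A (EuclideanSpace.single i 1) (EuclideanSpace.single i 1)
      = B (EuclideanSpace.single i 1) (EuclideanSpace.single i 1) + a := by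
    intro i; simp [hA]
  simp_rw [← hAe]
  set S := ∑ i : Fin N, A (EuclideanSpace.single i 1) (EuclideanSpace.single i 1)
  have hpsd : ∀ v, 0 ≤ A v v := by
    intro v; simpa [hA] using h v
  have hS : 0 ≤ S := Finset.sum_nonneg fun i _ => hpsd _
  have hcs : ∀ v w, |A v w| ≤ (A v v + A w w) / 2 := by
    intro v w
    have h1 := hpsd (v + w)
    have h2 := hpsd (v - w)
    simp only [hA, map_add, map_sub, inner_add_left, inner_add_right, inner_sub_left,
      inner_sub_right, ContinuousLinearMap.add_apply, ContinuousLinearMap.sub_apply] at h1 h2 ⊢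
    rw [hsymm w v, real_inner_comm v w] at h1 h2
    rw [abs_le]
    constructor <;> linarith
  have hle : ∀ i : Fin N, A (EuclideanSpace.single i 1) (EuclideanSpace.single i 1) ≤ S := fun i =>
    Finset.single_le_sum (f := fun i : Fin N => A (EuclideanSpace.single i 1) (EuclideanSpace.single i 1))
      (fun i _ => hpsd _) (Finset.mem_univ i)
  -- A v v ≤ N * S * ‖v‖^2
  have hexp : ∀ v : E N, v = ∑ i, v i • EuclideanSpace.single i (1:ℝ) := by
    intro v
    have := (EuclideanSpace.basisFun (Fin N) ℝ).sum_repr v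
    simpa using this.symm
  have hAv : ∀ v w, A v w = ∑ i, ∑ j, v i * (w j * A (EuclideanSpace.single i 1) (EuclideanSpace.single j 1)) := by
    intro v w
    simp only [hA]
    conv_lhs => rw [hexp v, hexp w]
    simp only [map_sum, map_smul, ContinuousLinearMap.sum_apply, ContinuousLinearMap.smul_apply, sum_inner, inner_sum,
      inner_smul_left, inner_smul_right, smul_eq_mul, Finset.mul_sum, ← Finset.sum_add_distrib]
    rw [Finset.sum_comm]
    refine Finset.sum_congr rfl fun i _ => Finset.sum_congr rfl fun j _ => ?_
    simp
    ring
  have hbd : ∀ v w, |A v w| ≤ N * S * (‖v‖ * ‖w‖) := by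
    intro v w
    rw [hAv]
    have hco : ∀ (v : E N) i, |v i| ≤ ‖v‖ := fun v i => by
      simpa using PiLp.norm_apply_le v i
    calc _ ≤ ∑ i : Fin N, ∑ j : Fin N, ‖v‖ * (‖w‖ * ((A (EuclideanSpace.single i 1) (EuclideanSpace.single i 1) + A (EuclideanSpace.single j 1) (EuclideanSpace.single j 1)) / 2)) := by
          refine (Finset.abs_sum_le_sum_abs _ _).trans (Finset.sum_le_sum fun i _ => ?_)
          refine (Finset.abs_sum_le_sum_abs _ _).trans (Finset.sum_le_sum fun j _ => ?_)
          rw [abs_mul, abs_mul]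
          gcongr
          · exact hco v i
          · exact hco w j
          · exact hcs _ _
      _ = N * S * (‖v‖ * ‖w‖) := by
          simp only [← Finset.mul_sum, ← Finset.sum_div, Finset.sum_add_distrib, Finset.sum_const, Finset.card_univ, Fintype.card_fin, nsmul_eq_mul]
          change ‖v‖ * (‖w‖ * ((N * S + N * S) / 2)) = _
          ring
  refine ContinuousMultilinearMap.opNorm_le_bound (by positivity) fun m => ?_
  rw [iteratedFDeriv_two_apply, Fin.prod_univ_two]
  change ‖B (m 0) (m 1)‖ ≤ _
  have e : B (m 0) (m 1) = A (m 0) (m 1) - a * inner ℝ (m 0) (m 1) := by simp [hA]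
  have h5 := hbd (m 0) (m 1)
  have h6 := mul_le_mul_of_nonneg_left (abs_real_inner_le_norm (m 0) (m 1)) ha
  rw [e, Real.norm_eq_abs]
  calc _ ≤ |A (m 0) (m 1)| + |a * inner ℝ (m 0) (m 1)| := abs_sub _ _
    _ = |A (m 0) (m 1)| + a * |inner ℝ (m 0) (m 1)| := by rw [abs_mul, abs_of_nonneg ha]
    _ ≤ _ := by rw [add_mul]; linarith

lemma aux_ibp {N : ℕ} {u φ : E N → ℝ} (hc : ContDiff ℝ 2 u) (hφ : ContDiff ℝ 2 φ)
    (hs : HasCompactSupport φ) (e : E N) :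
    ∫ x, φ x * fderiv ℝ (fderiv ℝ u) x e e = ∫ x, fderiv ℝ (fun y => fderiv ℝ φ y e) x e * u x := by
  have key : ∀ f : E N → ℝ, ContDiff ℝ 2 f → ContDiff ℝ 1 (fun y => fderiv ℝ f y e) := fun f hf =>
    (hf.fderiv_right (m := 1) (by norm_num)).clm_apply contDiff_const
  have key2 : ∀ f : E N → ℝ, ContDiff ℝ 1 f → Continuous (fun y => fderiv ℝ f y e) := fun f hf =>
    (hf.continuous_fderiv (by norm_num)).clm_apply continuous_const
  have e1 : ∀ x, fderiv ℝ (fderiv ℝ u) x e e = fderiv ℝ (fun y => fderiv ℝ u y e) x e := by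
    intro x
    rw [fderiv_clm_apply]
    · simp
    · exact (hc.fderiv_right (m := 1) (by norm_num)).differentiable (by norm_num) x
    · fun_prop
  simp_rw [e1]
  have hs1 : HasCompactSupport (fun y => fderiv ℝ φ y e) := hs.fderiv_apply ℝ e
  have hs2 : HasCompactSupport (fun x => fderiv ℝ (fun y => fderiv ℝ φ y e) x e) := hs1.fderiv_apply ℝ e
  have cu := key u hc
  have cp := key φ hφ
  have cu2 := key2 _ cu
  have cp2 := key2 _ cp
  rw [integral_mul_fderiv_eq_neg_fderiv_mul_of_integrable,
    integral_mul_fderiv_eq_neg_fderiv_mul_of_integrable, neg_neg]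
  · exact (cp2.mul hc.continuous).integrable_of_hasCompactSupport hs2.mul_right
  · exact (cp.continuous.mul cu.continuous).integrable_of_hasCompactSupport hs1.mul_right
  · exact (cp.continuous.mul hc.continuous).integrable_of_hasCompactSupport hs1.mul_right
  · exact fun x _ => cp.differentiable (by norm_num) x
  · exact fun x _ => hc.differentiable (by norm_num) x
  · exact (cp.continuous.mul cu.continuous).integrable_of_hasCompactSupport hs1.mul_right
  · exact (hφ.continuous.mul cu2).integrable_of_hasCompactSupport hs.mul_right
  · exact (hφ.continuous.mul cu.continuous).integrable_of_hasCompactSupport hs.mul_right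
  · exact fun x _ => hφ.differentiable (by norm_num) x
  · exact fun x _ => cu.differentiable (by norm_num) x

lemma aux_fatou {N : ℕ} {T : ℝ} (hT : 0 < T) {u : E N → ℝ} (hu : VT N T u) (e : E N)
    (he : ‖e‖ = 1) :
    ∫⁻ x, ENNReal.ofReal (fderiv ℝ (fderiv ℝ u) x e e + u x / (2 * T)) ≤
      ENNReal.ofReal (1 / (2 * T)) := by
  have hG := fun x => aux_hess hT hu x e
  obtain ⟨hc, hint, hpos, h1, -⟩ := hu
  simp only [he, one_pow, mul_one] at hG
  have hcG : Continuous (fun x => fderiv ℝ (fderiv ℝ u) x e e) :=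
    (((hc.fderiv_right (m := 1) (by norm_num)).continuous_fderiv (by norm_num)).clm_apply
      continuous_const).clm_apply continuous_const
  let ψ : ContDiffBump (0 : E N) := ⟨1, 2, by norm_num, by norm_num⟩
  let c : ℕ → ℝ := fun n => 1 / ((n : ℝ) + 1)
  have hc0 : ∀ n, 0 < c n := fun n => Nat.one_div_pos_of_nat
  have hclim : Tendsto c atTop (𝓝 0) := tendsto_one_div_add_atTop_nhds_zero_nat
  let φ : ℕ → E N → ℝ := fun n x => ψ (c n • x)
  have hψ : ContDiff ℝ 2 ψ := ψ.contDiff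
  have hφ : ∀ n, ContDiff ℝ 2 (φ n) := fun n => hψ.comp (contDiff_const_smul _)
  have hφs : ∀ n, HasCompactSupport (φ n) := fun n =>
    ψ.hasCompactSupport.comp_smul (hc0 n).ne'
  have cp : ContDiff ℝ 1 (fun y => fderiv ℝ ψ y e) :=
    (hψ.fderiv_right (m := 1) (by norm_num)).clm_apply contDiff_const
  obtain ⟨M, hM⟩ : ∃ M, ∀ x, ‖fderiv ℝ (fun y => fderiv ℝ ψ y e) x e‖ ≤ M :=
    ((ψ.hasCompactSupport.fderiv_apply ℝ e).fderiv_apply ℝ e).exists_bound_of_continuous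
      ((cp.continuous_fderiv (by norm_num)).clm_apply continuous_const)
  have hder : ∀ n x, fderiv ℝ (fun y => fderiv ℝ (φ n) y e) x e =
      c n ^ 2 * fderiv ℝ (fun y => fderiv ℝ ψ y e) (c n • x) e := by
    intro n x
    have a1 : (fun y => fderiv ℝ (φ n) y e) = fun y => c n • (fun z => fderiv ℝ ψ z e) (c n • y) := by
      funext y
      simp only [φ]
      rw [fderiv_comp_smul (f := ψ)]
      simp
    rw [a1, fderiv_fun_const_smul, fderiv_comp_smul (f := fun z => fderiv ℝ ψ z e)]
    · simp; ring
    · exact (cp.differentiable (by norm_num)).comp (differentiable_id.const_smul (c n)) x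
  have hbound : ∀ n, ∫⁻ x, ENNReal.ofReal (φ n x * (fderiv ℝ (fderiv ℝ u) x e e + u x / (2 * T))) ≤
      ENNReal.ofReal (c n ^ 2 * M + 1 / (2 * T)) := by
    intro n
    have i1 : Integrable (fun x => φ n x * fderiv ℝ (fderiv ℝ u) x e e) :=
      ((hφ n).continuous.mul hcG).integrable_of_hasCompactSupport (hφs n).mul_right
    have i2 : Integrable (fun x => φ n x * (u x / (2 * T))) :=
      ((hφ n).continuous.mul (hc.continuous.div_const _)).integrable_of_hasCompactSupport (hφs n).mul_right
    have i3 : Integrable (fun x => φ n x * (fderiv ℝ (fderiv ℝ u) x e e + u x / (2 * T))) := by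
      simp_rw [mul_add]; exact i1.add i2
    rw [← ofReal_integral_eq_lintegral_ofReal i3 (ae_of_all _ fun x => mul_nonneg ψ.nonneg (hG x))]
    apply ENNReal.ofReal_le_ofReal
    simp_rw [mul_add]
    rw [integral_add i1 i2, aux_ibp hc (hφ n) (hφs n)]
    apply add_le_add
    · calc _ ≤ ∫ x, (c n ^ 2 * M) * u x := by
            have cpn : ContDiff ℝ 1 (fun y => fderiv ℝ (φ n) y e) :=
              ((hφ n).fderiv_right (m := 1) (by norm_num)).clm_apply contDiff_const
            have i4 : Integrable (fun x => fderiv ℝ (fun y => fderiv ℝ (φ n) y e) x e * u x) :=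
              (((cpn.continuous_fderiv (by norm_num)).clm_apply continuous_const).mul
                hc.continuous).integrable_of_hasCompactSupport
                (((hφs n).fderiv_apply ℝ e).fderiv_apply ℝ e).mul_right
            refine integral_mono i4 (hint.const_mul _) fun x => ?_
            simp only [hder]
            have := (hpos x).le
            have := (le_abs_self _).trans (hM (c n • x))
            gcongr
        _ = _ := by rw [integral_const_mul, h1, mul_one]
    · calc _ ≤ ∫ x, u x / (2 * T) := by
            refine integral_mono i2 (hint.div_const _) fun x => ?_
            have := (hpos x).le
            exact mul_le_of_le_one_left (by positivity) ψ.le_one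
        _ = _ := by rw [integral_div, h1]
  have hpt : ∀ x, ENNReal.ofReal (fderiv ℝ (fderiv ℝ u) x e e + u x / (2 * T)) =
      liminf (fun n => ENNReal.ofReal (φ n x * (fderiv ℝ (fderiv ℝ u) x e e + u x / (2 * T)))) atTop := by
    intro x
    symm
    apply Tendsto.liminf_eq
    apply tendsto_const_nhds.congr'
    have : Tendsto (fun n => c n • x) atTop (𝓝 0) := by simpa using hclim.smul_const x
    filter_upwards [this (closedBall_mem_nhds (0 : E N) one_pos)] with n hn
    have : φ n x = 1 := ψ.one_of_mem_closedBall hn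
    rw [this, one_mul]
  calc _ = _ := lintegral_congr hpt
    _ ≤ _ := lintegral_liminf_le fun n => (((hφ n).continuous.mul (hcG.add (hc.continuous.div_const _))).measurable).ennreal_ofReal
    _ ≤ liminf (fun n => ENNReal.ofReal (c n ^ 2 * M + 1 / (2 * T))) atTop :=
        liminf_le_liminf (Eventually.of_forall hbound)
    _ = _ := by
        apply Tendsto.liminf_eq
        apply ENNReal.tendsto_ofReal
        simpa using ((hclim.pow 2).mul_const M).add_const (1 / (2 * T))

/-- there is `C₁ = C₁(N) > 0` so that for every `u ∈ 𝒱𝒯₁⁺(T)` the pointwise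
operator norm of the Hessian of `u` is integrable with `∫ |∇²u| ≤ C₁ T⁻¹`. -/
theorem statement_4 (N : ℕ) (hN : 1 ≤ N) :
    ∃ C₁ : ℝ, 0 < C₁ ∧
      ∀ T : ℝ, 0 < T → ∀ u : E N → ℝ, VT N T u →
        Integrable (fun x => ‖iteratedFDeriv ℝ 2 u x‖) volume ∧
        (∫ x, ‖iteratedFDeriv ℝ 2 u x‖) ≤ C₁ * T⁻¹ := by
  refine ⟨((N : ℝ) ^ 2 + 1) / 2, by positivity, fun T hT u hu => ?_⟩
  have hh := aux_hess hT hu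
  have hf := fun i : Fin N => aux_fatou hT hu (EuclideanSpace.single i 1) (by simp)
  obtain ⟨hc, hint, hpos, h1, -⟩ := hu
  have hcG : ∀ e : E N, Continuous (fun x => fderiv ℝ (fderiv ℝ u) x e e + u x / (2 * T)) := fun e =>
    ((((hc.fderiv_right (m := 1) (by norm_num)).continuous_fderiv (by norm_num)).clm_apply
      continuous_const).clm_apply continuous_const).add (hc.continuous.div_const _)
  have hG : ∀ (i : Fin N) x, 0 ≤ fderiv ℝ (fderiv ℝ u) x (EuclideanSpace.single i 1)
      (EuclideanSpace.single i 1) + u x / (2 * T) := by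
    intro i x
    simpa using hh x (EuclideanSpace.single i 1)
  have hGi : ∀ i : Fin N, Integrable (fun x => fderiv ℝ (fderiv ℝ u) x (EuclideanSpace.single i 1)
      (EuclideanSpace.single i 1) + u x / (2 * T)) := by
    intro i
    refine ⟨(hcG _).aestronglyMeasurable, ?_⟩
    rw [hasFiniteIntegral_iff_ofReal (ae_of_all _ (hG i))]
    exact (hf i).trans_lt ENNReal.ofReal_lt_top
  have hGb : ∀ i : Fin N, ∫ x, (fderiv ℝ (fderiv ℝ u) x (EuclideanSpace.single i 1)
      (EuclideanSpace.single i 1) + u x / (2 * T)) ≤ 1 / (2 * T) := by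
    intro i
    rw [integral_eq_lintegral_of_nonneg_ae (ae_of_all _ (hG i)) (hcG _).aestronglyMeasurable]
    exact ENNReal.toReal_le_of_le_ofReal (by positivity) (hf i)
  have hn := fun x => aux_norm hc x (u x / (2 * T)) (by have := hpos x; positivity) (hh x)
  have is : Integrable (fun x => ∑ i : Fin N, (fderiv ℝ (fderiv ℝ u) x (EuclideanSpace.single i 1)
      (EuclideanSpace.single i 1) + u x / (2 * T))) := integrable_finset_sum _ fun i _ => hGi i
  have ib := (is.const_mul (N : ℝ)).add (hint.div_const (2 * T))
  have hi : Integrable (fun x => ‖iteratedFDeriv ℝ 2 u x‖) volume := by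
    refine ib.mono' (hc.continuous_iteratedFDeriv (by norm_num)).norm.aestronglyMeasurable
      (ae_of_all _ fun x => ?_)
    rw [norm_norm]
    exact hn x
  refine ⟨hi, (integral_mono hi ib hn).trans ?_⟩
  simp only [Pi.add_apply]
  rw [integral_add (is.const_mul (N : ℝ)) (hint.div_const (2 * T)), integral_const_mul, integral_div, h1,
    integral_finset_sum _ fun i _ => hGi i]
  calc _ ≤ (N : ℝ) * ∑ i : Fin N, (1 / (2 * T)) + 1 / (2 * T) := by
        gcongr with i _
        exact hGb i
    _ = _ := by
        simp
        field_simp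
end
end

section
/- For every N ≥ 1 there is a constant C₂ = C₂(N) > 0 such that for every τ₀ > 0, every u₀ ∈ VT₁⁺(τ₀), and the heat flow U(t,·) = H_t u₀: (i) for all t ≥ 0 and x ∈ ℝ^N, U(t,x) + τ₀^{1/2} |∇U(t,x)| ≤ C₂ τ₀^{-N/2}; and (ii) for all t > 0 and x ∈ ℝ^N, |∇²U(t,x)| ≤ C₂ τ₀^{-1} t^{-N/2}. -/
open MeasureTheory Filter Metric
open scoped ENNReal NNReal Topology

noncomputable section

lemma hadd (f : ℝ → ℝ) (f' f'' : ℝ → ℝ) (h1 : ∀ s, HasDerivAt f (f' s) s)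
    (h2 : ∀ s, HasDerivAt f' (f'' s) s) (h3 : ∀ s, 0 ≤ f'' s) : f 0 + f' 0 ≤ f 1 := by
  have hmono : Monotone f' := monotone_of_hasDerivAt_nonneg h2 h3
  obtain ⟨c, hc, hc'⟩ := exists_hasDerivAt_eq_slope f f' (zero_lt_one)
    (fun s _ => (h1 s).continuousAt.continuousWithinAt) (fun s _ => h1 s)
  have := hmono hc.1.le
  rw [hc'] at this
  norm_num at this
  linarith

lemma key (N : ℕ) (T : ℝ) (hT : 0 < T) (u : E N → ℝ) (hu : VT N T u) (x v : E N) :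
    u x * Real.exp (fderiv ℝ (fun y => Real.log (u y)) x v - ‖v‖ ^ 2 / (4 * T)) ≤ u (x + v) := by
  obtain ⟨hC, hI, hpos, hm, hH⟩ := hu
  set f : E N → ℝ := fun y => Real.log (u y) with hf
  have hfC : ContDiff ℝ 2 f := hC.log (fun y => (hpos y).ne')
  have hd : Differentiable ℝ f := hfC.differentiable (by norm_num)
  have hd2 : Differentiable ℝ (fderiv ℝ f) :=
    (hfC.fderiv_right (m := 1) (by norm_num)).differentiable (by norm_num)
  have hline : ∀ s : ℝ, HasDerivAt (fun s : ℝ => x + s • v) v s := by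
    intro s
    simpa using ((hasDerivAt_id s).smul_const v).const_add x
  have h1 : ∀ s : ℝ, HasDerivAt (fun s => f (x + s • v) + s ^ 2 * (‖v‖ ^ 2 / (4 * T)))
      (fderiv ℝ f (x + s • v) v + 2 * s * (‖v‖ ^ 2 / (4 * T))) s := by
    intro s
    refine HasDerivAt.add ((hd _).hasFDerivAt.comp_hasDerivAt s (hline s)) ?_
    simpa using (hasDerivAt_pow 2 s).mul_const (‖v‖ ^ 2 / (4 * T))
  have h2 : ∀ s : ℝ, HasDerivAt (fun s => fderiv ℝ f (x + s • v) v + 2 * s * (‖v‖ ^ 2 / (4 * T)))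
      (fderiv ℝ (fderiv ℝ f) (x + s • v) v v + 2 * (‖v‖ ^ 2 / (4 * T))) s := by
    intro s
    refine HasDerivAt.add ?_ ?_
    · have := (hd2 (x + s • v)).hasFDerivAt.comp_hasDerivAt s (hline s)
      simpa using this.clm_apply (hasDerivAt_const s v)
    · simpa using ((hasDerivAt_id s).const_mul 2).mul_const (‖v‖ ^ 2 / (4 * T))
  have h3 := hadd _ _ _ h1 h2 (by
    intro s
    have := hH (x + s • v) v
    rw [iteratedFDeriv_two_apply] at this
    simp only [Matrix.cons_val_zero, Matrix.cons_val_one] at this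
    have e : fderiv ℝ (fderiv ℝ f) (x + s • v) v v + 2 * (‖v‖ ^ 2 / (4 * T)) =
      (2 * T * fderiv ℝ (fderiv ℝ f) (x + s • v) v v + ‖v‖ ^ 2) / (2 * T) := by
      field_simp
      ring
    rw [e]
    positivity)
  simp only [zero_smul, add_zero, one_smul] at h3
  norm_num at h3
  have h4 := Real.exp_le_exp.2 (show f x + (fderiv ℝ f x v - ‖v‖ ^ 2 / (4 * T)) ≤ f (x + v) by
    linarith)
  rw [Real.exp_add] at h4
  simp only [hf, Real.exp_log (hpos _)] at h4
  exact h4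

lemma key2 (N : ℕ) (T : ℝ) (hT : 0 < T) (u : E N → ℝ) (hu : VT N T u) (x v : E N) :
    2 * (u x * Real.exp (-‖v‖ ^ 2 / (4 * T))) ≤ u (x + v) + u (x - v) := by
  have h1 := key N T hT u hu x v
  have h2 := key N T hT u hu x (-v)
  rw [map_neg, norm_neg, ← sub_eq_add_neg] at h2
  set a := fderiv ℝ (fun y => Real.log (u y)) x v
  have e1 : Real.exp (a - ‖v‖ ^ 2 / (4 * T)) = Real.exp a * Real.exp (-‖v‖ ^ 2 / (4 * T)) := by
    rw [← Real.exp_add]; congr 1; ring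
  have e2 : Real.exp (-a - ‖v‖ ^ 2 / (4 * T)) = Real.exp (-a) * Real.exp (-‖v‖ ^ 2 / (4 * T)) := by
    rw [← Real.exp_add]; congr 1; ring
  rw [e1] at h1
  rw [e2] at h2
  have h3 : 2 ≤ Real.exp a + Real.exp (-a) := by
    have := Real.one_le_cosh a
    rw [Real.cosh_eq] at this
    linarith
  have hp : 0 < u x * Real.exp (-‖v‖ ^ 2 / (4 * T)) := mul_pos (hu.2.2.1 x) (Real.exp_pos _)
  nlinarith

def kk (N : ℕ) (t : ℝ) (z : E N) : ℝ :=
  (4 * Real.pi * t) ^ (-(N : ℝ) / 2) * Real.exp (-‖z‖ ^ 2 / (4 * t))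

lemma gauss_int (N : ℕ) (t : ℝ) (ht : 0 < t) :
    Integrable (fun z : E N => Real.exp (-‖z‖ ^ 2 / (4 * t))) ∧
    ∫ z : E N, Real.exp (-‖z‖ ^ 2 / (4 * t)) = (4 * Real.pi * t) ^ ((N : ℝ) / 2) := by
  have hb : (0:ℝ) < 1 / (4 * t) := by positivity
  have e : (fun z : E N => Real.exp (-‖z‖ ^ 2 / (4 * t))) =
      fun z : E N => Real.exp (-(1 / (4 * t)) * ‖z‖ ^ 2) := by
    funext z; congr 1; ring
  have h := GaussianFourier.integral_rexp_neg_mul_sq_norm (V := E N) hb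
  have h' : ∫ z : E N, Real.exp (-‖z‖ ^ 2 / (4 * t)) = (4 * Real.pi * t) ^ ((N : ℝ) / 2) := by
    rw [e, h]
    simp only [finrank_euclideanSpace, Fintype.card_fin]
    congr 1
    field_simp
  refine ⟨?_, h'⟩
  by_contra hc
  rw [integral_undef hc] at h'
  have : (0:ℝ) < (4 * Real.pi * t) ^ ((N : ℝ) / 2) := by positivity
  linarith

lemma kk_int (N : ℕ) (t : ℝ) (ht : 0 < t) : Integrable (kk N t) ∧ ∫ z, kk N t z = 1 := by
  obtain ⟨h1, h2⟩ := gauss_int N t ht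
  refine ⟨h1.const_mul _, ?_⟩
  unfold kk
  rw [integral_const_mul, h2, ← Real.rpow_add (by positivity)]
  ring_nf
  simp

lemma kk_nonneg (N : ℕ) (t : ℝ) (ht : 0 < t) (z : E N) : 0 ≤ kk N t z := by
  unfold kk; positivity

lemma kk_le (N : ℕ) (t : ℝ) (ht : 0 < t) (z : E N) :
    kk N t z ≤ (4 * Real.pi * t) ^ (-(N : ℝ) / 2) := by
  unfold kk
  apply mul_le_of_le_one_right (by positivity)
  apply Real.exp_le_one_iff.2
  rw [neg_div]
  have : 0 ≤ ‖z‖ ^ 2 / (4 * t) := by positivity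
  linarith

lemma kk_cont (N : ℕ) (t : ℝ) : Continuous (kk N t) := by
  unfold kk; fun_prop

lemma pow_cmp (N : ℕ) (t : ℝ) (ht : 0 < t) :
    (4 * Real.pi * t) ^ (-(N : ℝ) / 2) ≤ t ^ (-(N : ℝ) / 2) := by
  apply Real.rpow_le_rpow_of_nonpos ht
  · nlinarith [Real.pi_gt_three]
  · have : (0:ℝ) ≤ N := by positivity
    linarith

lemma sup_bd (N : ℕ) (T : ℝ) (hT : 0 < T) (u : E N → ℝ) (hu : VT N T u) (x : E N) :
    u x ≤ T ^ (-(N : ℝ) / 2) := by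
  refine le_trans ?_ (pow_cmp N T hT)
  obtain ⟨h1, h2⟩ := gauss_int N T hT
  have hi1 : Integrable (fun v => u (x + v)) := hu.2.1.comp_add_left x
  have hi2 : Integrable (fun v => u (x - v)) := hu.2.1.comp_sub_left x
  have := integral_mono ((h1.const_mul (u x)).const_mul 2) (hi1.add hi2)
    (fun v => key2 N T hT u hu x v)
  simp only [Pi.add_apply] at this
  rw [integral_add hi1 hi2, integral_const_mul, integral_const_mul, h2,
    integral_add_left_eq_self u x, integral_sub_left_eq_self u volume x, hu.2.2.2.1] at this
  rw [neg_div, Real.rpow_neg (by positivity), ← one_div, le_div_iff₀ (by positivity)]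
  linarith

lemma grad_bd (N : ℕ) (T : ℝ) (hT : 0 < T) (u : E N → ℝ) (hu : VT N T u) (x : E N) :
    Real.sqrt T * ‖fderiv ℝ u x‖ ≤ T ^ (-(N : ℝ) / 2) := by
  have hd : DifferentiableAt ℝ u x := hu.1.differentiable (by norm_num) x
  have hl : fderiv ℝ (fun y => Real.log (u y)) x = (u x)⁻¹ • fderiv ℝ u x :=
    fderiv.log hd (hu.2.2.1 x).ne'
  set p := gradient (fun y => Real.log (u y)) x with hp
  have hpn : ‖p‖ = ‖fderiv ℝ (fun y => Real.log (u y)) x‖ := by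
    simp [hp, gradient]
  have hpp : fderiv ℝ (fun y => Real.log (u y)) x p = ‖p‖ ^ 2 := by
    rw [← real_inner_self_eq_norm_sq]
    have h0 : InnerProductSpace.toDual ℝ (E N) p = fderiv ℝ (fun y => Real.log (u y)) x := by
      simp [hp, gradient]
    rw [← h0, InnerProductSpace.toDual_apply_apply]
  have hu0 := hu.2.2.1 x
  have h1 := key N T hT u hu x ((2 * T) • p)
  rw [map_smul, hpp, norm_smul, Real.norm_of_nonneg (by positivity), smul_eq_mul] at h1
  have e : 2 * T * ‖p‖ ^ 2 - (2 * T * ‖p‖) ^ 2 / (4 * T) = T * ‖p‖ ^ 2 := by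
    field_simp; ring
  rw [e] at h1
  have h2 := h1.trans (sup_bd N T hT u hu _)
  refine le_trans ?_ h2
  have e2 : ‖fderiv ℝ u x‖ = u x * ‖p‖ := by
    rw [hpn, hl, norm_smul, Real.norm_of_nonneg (by positivity)]
    field_simp
  rw [e2]
  have h3 : Real.sqrt T * ‖p‖ ≤ Real.exp (T * ‖p‖ ^ 2) := by
    have := Real.add_one_le_exp (T * ‖p‖ ^ 2)
    have hs := Real.sq_sqrt hT.le
    nlinarith [sq_nonneg (Real.sqrt T * ‖p‖ - 1), Real.sqrt_nonneg T]
  calc Real.sqrt T * (u x * ‖p‖) = u x * (Real.sqrt T * ‖p‖) := by ring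
    _ ≤ _ := by gcongr

lemma flow_eq (N : ℕ) (u : E N → ℝ) (t : ℝ) (ht : 0 < t) (x : E N) :
    heatFlow N u t x = ∫ z, u (x + z) * kk N t z := by
  unfold heatFlow
  rw [if_neg ht.ne', ← integral_add_left_eq_self _ x]
  simp [heatKernel, kk]

lemma flow_int (N : ℕ) (T : ℝ) (u : E N → ℝ) (hu : VT N T u) (t : ℝ) (ht : 0 < t)
    (x : E N) : Integrable (fun z => u (x + z) * kk N t z) := by
  have hi1 : Integrable (fun v => u (x + v)) := hu.2.1.comp_add_left x
  refine hi1.mul_bdd (c := (4 * Real.pi * t) ^ (-(N : ℝ) / 2))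
    (kk_cont N t).aestronglyMeasurable (Eventually.of_forall fun z => ?_)
  rw [Real.norm_of_nonneg (kk_nonneg N t ht z)]
  exact kk_le N t ht z

lemma flow_diff (N : ℕ) (T : ℝ) (hT : 0 < T) (u : E N → ℝ) (hu : VT N T u) (t : ℝ) (ht : 0 < t) :
    Differentiable ℝ (heatFlow N u t) ∧
    ∀ x, Real.sqrt T * ‖fderiv ℝ (heatFlow N u t) x‖ ≤ T ^ (-(N : ℝ) / 2) := by
  set L := T ^ (-(N : ℝ) / 2) / Real.sqrt T with hL
  have hs : 0 < Real.sqrt T := Real.sqrt_pos.2 hT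
  have hg : ∀ x, ‖fderiv ℝ u x‖ ≤ L := by
    intro x
    rw [hL, le_div_iff₀ hs]
    linarith [grad_bd N T hT u hu x]
  have hfl : heatFlow N u t = fun x => ∫ z, u (x + z) * kk N t z := by
    funext x; exact flow_eq N u t ht x
  have hd : Differentiable ℝ u := hu.1.differentiable (by norm_num)
  have hc : Continuous (fderiv ℝ u) := hu.1.continuous_fderiv (by norm_num)
  have hk := kk_cont N t
  have hbd : ∀ x z, ‖kk N t z • fderiv ℝ u (x + z)‖ ≤ kk N t z * L := by
    intro x z
    rw [norm_smul, Real.norm_of_nonneg (kk_nonneg N t ht z)]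
    exact mul_le_mul_of_nonneg_left (hg _) (kk_nonneg N t ht z)
  have hki := kk_int N t ht
  have hD : ∀ x, HasFDerivAt (heatFlow N u t) (∫ z, kk N t z • fderiv ℝ u (x + z)) x := by
    intro x
    rw [hfl]
    refine hasFDerivAt_integral_of_dominated_of_fderiv_le (s := Set.univ) (bound := fun z => kk N t z * L)
      (F' := fun x z => kk N t z • fderiv ℝ u (x + z)) 
      univ_mem ?_ (flow_int N T u hu t ht x) ?_ ?_ (hki.1.mul_const L) ?_
    · exact Eventually.of_forall fun y => (flow_int N T u hu t ht y).aestronglyMeasurable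
    · exact Continuous.aestronglyMeasurable (by fun_prop)
    · exact Eventually.of_forall fun z y _ => hbd y z
    · refine Eventually.of_forall fun z y _ => ?_
      have : HasFDerivAt (fun x => u (x + z)) (fderiv ℝ u (y + z)) y := by
        rw [hasFDerivAt_comp_add_right]
        exact (hd _).hasFDerivAt
      exact this.mul_const _
  refine ⟨fun x => (hD x).differentiableAt, fun x => ?_⟩
  rw [(hD x).fderiv]
  have : ‖∫ z, kk N t z • fderiv ℝ u (x + z)‖ ≤ ∫ z, kk N t z * L :=
    norm_integral_le_of_norm_le (hki.1.mul_const L) (Eventually.of_forall fun z => hbd x z)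
  rw [integral_mul_const, hki.2, one_mul, hL, le_div_iff₀ hs] at this
  linarith

lemma flow_bds (N : ℕ) (T : ℝ) (hT : 0 < T) (u : E N → ℝ) (hu : VT N T u) (t : ℝ) (ht : 0 < t)
    (x : E N) : 0 ≤ heatFlow N u t x ∧ heatFlow N u t x ≤ T ^ (-(N : ℝ) / 2) ∧
      heatFlow N u t x ≤ (4 * Real.pi * t) ^ (-(N : ℝ) / 2) := by
  rw [flow_eq N u t ht x]
  have hi := flow_int N T u hu t ht x
  have hki := kk_int N t ht
  refine ⟨integral_nonneg fun z => mul_nonneg (hu.2.2.1 _).le (kk_nonneg N t ht z), ?_, ?_⟩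
  · have := integral_mono hi (hki.1.const_mul (T ^ (-(N : ℝ) / 2)))
      (fun z => mul_le_mul_of_nonneg_right (sup_bd N T hT u hu (x + z)) (kk_nonneg N t ht z))
    rwa [integral_const_mul, hki.2, mul_one] at this
  · have hi1 : Integrable (fun v => u (x + v)) := hu.2.1.comp_add_left x
    have := integral_mono hi (hi1.mul_const ((4 * Real.pi * t) ^ (-(N : ℝ) / 2)))
      (fun z => mul_le_mul_of_nonneg_left (kk_le N t ht z) (hu.2.2.1 (x + z)).le)
    rwa [integral_mul_const, integral_add_left_eq_self u x, hu.2.2.2.1, one_mul] at this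

lemma second_diff (N : ℕ) (T : ℝ) (hT : 0 < T) (u : E N → ℝ) (hu : VT N T u) (t : ℝ) (ht : 0 < t)
    (x h : E N) : |heatFlow N u t (x + h) + heatFlow N u t (x - h) - 2 * heatFlow N u t x| ≤
      (4 * Real.pi * t) ^ (-(N : ℝ) / 2) / (2 * T) * ‖h‖ ^ 2 := by
  set A := (4 * Real.pi * t) ^ (-(N : ℝ) / 2) with hA
  set c := ‖h‖ ^ 2 / (2 * T) with hc
  have hc0 : 0 ≤ c := by positivity
  let w : E N → ℝ := fun z => u (x + h + z) + u (x - h + z) + (c - 2) * u (x + z)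
  have hw : ∀ z, 0 ≤ w z := by
    intro z
    have h1 := key2 N T hT u hu (x + z) h
    have h2 := Real.add_one_le_exp (-‖h‖ ^ 2 / (4 * T))
    have e : -‖h‖ ^ 2 / (4 * T) = - c / 2 := by rw [hc]; field_simp; ring
    rw [e] at h1 h2
    have h3 := hu.2.2.1 (x + z)
    have e1 : x + h + z = x + z + h := by abel
    have e2 : x - h + z = x + z - h := by abel
    simp only [w, e1, e2]
    nlinarith
  have i1 : Integrable (fun z => u (x + h + z)) := hu.2.1.comp_add_left _
  have i2 : Integrable (fun z => u (x - h + z)) := hu.2.1.comp_add_left _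
  have i3 : Integrable (fun z => (c - 2) * u (x + z)) := (hu.2.1.comp_add_left _).const_mul _
  have i12 : Integrable (fun z => u (x + h + z) + u (x - h + z)) := i1.add i2
  have hwi : Integrable w := i12.add i3
  have hwint : ∫ z, w z = c := by
    simp only [w]
    rw [integral_add i12 i3, integral_add i1 i2, integral_const_mul, integral_add_left_eq_self u,
      integral_add_left_eq_self u, integral_add_left_eq_self u, hu.2.2.2.1]
    ring
  have j1 := flow_int N T u hu t ht (x + h)
  have j2 := flow_int N T u hu t ht (x - h)
  have j3 := (flow_int N T u hu t ht x).const_mul (c - 2)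
  have j12 : Integrable (fun z => u (x + h + z) * kk N t z + u (x - h + z) * kk N t z) := j1.add j2
  have ew : (fun z => w z * kk N t z) = fun z => (u (x + h + z) * kk N t z +
      u (x - h + z) * kk N t z) + (c - 2) * (u (x + z) * kk N t z) := by
    funext z; simp only [w]; ring
  have hwk : Integrable (fun z => w z * kk N t z) := by rw [ew]; exact j12.add j3
  have hv : ∫ z, w z * kk N t z = heatFlow N u t (x + h) + heatFlow N u t (x - h) +
      (c - 2) * heatFlow N u t x := by
    rw [ew, integral_add j12 j3, integral_add j1 j2, integral_const_mul, flow_eq N u t ht,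
      flow_eq N u t ht, flow_eq N u t ht]
  have lo : 0 ≤ ∫ z, w z * kk N t z :=
    integral_nonneg fun z => mul_nonneg (hw z) (kk_nonneg N t ht z)
  have hi : ∫ z, w z * kk N t z ≤ c * A := by
    have := integral_mono hwk (hwi.mul_const A)
      (fun z => mul_le_mul_of_nonneg_left (kk_le N t ht z) (hw z))
    rwa [integral_mul_const, hwint] at this
  rw [hv] at lo hi
  obtain ⟨b1, -, b2⟩ := flow_bds N T hT u hu t ht x
  have e : A / (2 * T) * ‖h‖ ^ 2 = c * A := by rw [hc]; ring
  rw [e, abs_le]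
  constructor <;> nlinarith

lemma quad_bd {V : Type*} [NormedAddCommGroup V] [InnerProductSpace ℝ V] (U : V → ℝ) (M : ℝ)
    (hU : Differentiable ℝ U) (x : V) (hU2 : DifferentiableAt ℝ (fderiv ℝ U) x)
    (h : ∀ v, |U (x + v) + U (x - v) - 2 * U x| ≤ M * ‖v‖ ^ 2) (v : V) :
    |fderiv ℝ (fderiv ℝ U) x v v| ≤ M * ‖v‖ ^ 2 := by
  have hp : ∀ s : ℝ, HasDerivAt (fun s : ℝ => x + s • v) v s := by
    intro s
    simpa using ((hasDerivAt_id s).smul_const v).const_add x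
  have hm : ∀ s : ℝ, HasDerivAt (fun s : ℝ => x - s • v) (-v) s := by
    intro s
    simpa using ((hasDerivAt_id s).smul_const v).const_sub x
  have g1 : ∀ s : ℝ, HasDerivAt (fun s => U (x + s • v) + U (x - s • v) - 2 * U x)
      (fderiv ℝ U (x + s • v) v - fderiv ℝ U (x - s • v) v) s := by
    intro s
    have a := (hU (x + s • v)).hasFDerivAt.comp_hasDerivAt s (hp s)
    have b := (hU (x - s • v)).hasFDerivAt.comp_hasDerivAt s (hm s)
    have := (a.add b).sub_const (2 * U x)
    rw [map_neg, ← sub_eq_add_neg] at this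
    exact this
  set B := fderiv ℝ (fderiv ℝ U) x v v with hB
  have g2 : HasDerivAt (fun s : ℝ => fderiv ℝ U (x + s • v) v - fderiv ℝ U (x - s • v) v)
      (2 * B) 0 := by
    have a : HasDerivAt (fun s : ℝ => fderiv ℝ U (x + s • v)) (fderiv ℝ (fderiv ℝ U) x v) 0 :=
      HasFDerivAt.comp_hasDerivAt_of_eq (0:ℝ) hU2.hasFDerivAt (hp 0) (by simp)
    have b : HasDerivAt (fun s : ℝ => fderiv ℝ U (x - s • v)) (fderiv ℝ (fderiv ℝ U) x (-v)) 0 :=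
      HasFDerivAt.comp_hasDerivAt_of_eq (0:ℝ) hU2.hasFDerivAt (hm 0) (by simp)
    have a' := a.clm_apply (hasDerivAt_const (0:ℝ) v)
    have b' := b.clm_apply (hasDerivAt_const (0:ℝ) v)
    have := a'.sub b'
    refine this.congr_deriv ?_
    simp [hB]; ring
  have lim : Tendsto (fun s : ℝ => (U (x + s • v) + U (x - s • v) - 2 * U x) / s ^ 2)
      (𝓝[≠] 0) (𝓝 B) := by
    refine HasDerivAt.lhopital_zero_nhdsNE (f' := fun s => fderiv ℝ U (x + s • v) v - fderiv ℝ U (x - s • v) v)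
      (g' := fun s => 2 * s) (Eventually.of_forall g1) ?_ ?_ ?_ ?_ ?_
    · exact Eventually.of_forall fun s => by simpa using hasDerivAt_pow 2 s
    · filter_upwards [self_mem_nhdsWithin] with s hs
      simpa using hs
    · have := (g1 0).continuousAt.tendsto
      have e : U (x + (0:ℝ) • v) + U (x - (0:ℝ) • v) - 2 * U x = 0 := by
        simp only [zero_smul, add_zero, sub_zero]; ring
      rw [e] at this
      exact tendsto_nhdsWithin_of_tendsto_nhds this
    · have : Tendsto (fun s : ℝ => s ^ 2) (𝓝 0) (𝓝 (0 ^ 2)) := (continuous_pow 2).tendsto 0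
      simpa using tendsto_nhdsWithin_of_tendsto_nhds this
    · have := g2.tendsto_slope_zero
      have := this.const_mul (1/2)
      simp only [zero_add, zero_smul, add_zero, sub_zero, sub_self, smul_eq_mul] at this
      convert this using 2
      · field_simp
      · ring
  have := lim.abs
  refine le_of_tendsto this ?_
  filter_upwards [self_mem_nhdsWithin] with s hs
  have hs' : (0:ℝ) < s ^ 2 := by
    have : s ≠ 0 := hs
    positivity
  rw [abs_div, abs_of_pos hs', div_le_iff₀ hs']
  have := h (s • v)
  rw [norm_smul, mul_pow, Real.norm_eq_abs, sq_abs] at this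
  linarith

lemma hess_bd {V : Type*} [NormedAddCommGroup V] [InnerProductSpace ℝ V] (U : V → ℝ) (M : ℝ)
    (hM : 0 ≤ M) (hU : Differentiable ℝ U) (x : V)
    (h : ∀ v, |U (x + v) + U (x - v) - 2 * U x| ≤ M * ‖v‖ ^ 2) :
    ‖iteratedFDeriv ℝ 2 U x‖ ≤ M := by
  have key : ∀ v w, |fderiv ℝ (fderiv ℝ U) x v w| ≤ M * ‖v‖ * ‖w‖ := by
    by_cases hU2 : DifferentiableAt ℝ (fderiv ℝ U) x
    · have hq := quad_bd U M hU x hU2 h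
      have hsym : ∀ v w, fderiv ℝ (fderiv ℝ U) x v w = fderiv ℝ (fderiv ℝ U) x w v :=
        fun v w => second_derivative_symmetric (fun y => (hU y).hasFDerivAt) hU2.hasFDerivAt v w
      set B := fderiv ℝ (fderiv ℝ U) x
      have hu : ∀ v w, |B v w| ≤ M * ((‖v‖ ^ 2 + ‖w‖ ^ 2) / 2) := by
        intro v w
        have h1 := abs_le.1 (hq (v + w))
        have h2 := abs_le.1 (hq (v - w))
        have hpl := parallelogram_law_with_norm ℝ v w
        simp only [map_add, map_sub, ContinuousLinearMap.add_apply,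
          ContinuousLinearMap.sub_apply] at h1 h2
        have hs := hsym v w
        have e : M * (‖v + w‖ ^ 2) + M * ‖v - w‖ ^ 2 = M * (2 * (‖v‖ ^ 2 + ‖w‖ ^ 2)) := by
          rw [← mul_add]; congr 1
        rw [abs_le]
        constructor <;> linarith
      intro v w
      by_cases hv : v = 0
      · simp [hv]
      by_cases hw : w = 0
      · simp [hw]
      have hv' : 0 < ‖v‖ := norm_pos_iff.2 hv
      have hw' : 0 < ‖w‖ := norm_pos_iff.2 hw
      have := hu (‖v‖⁻¹ • v) (‖w‖⁻¹ • w)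
      rw [norm_smul, norm_smul, norm_inv, norm_inv, norm_norm, norm_norm,
        inv_mul_cancel₀ hv'.ne', inv_mul_cancel₀ hw'.ne'] at this
      simp only [map_smul, ContinuousLinearMap.smul_apply, smul_eq_mul, abs_mul, abs_inv,
        abs_norm] at this
      norm_num at this
      have e : |B v w| = ‖v‖ * ‖w‖ * (‖v‖⁻¹ * (‖w‖⁻¹ * |B v w|)) := by
        field_simp
      have h3 : ‖v‖⁻¹ * (‖w‖⁻¹ * |B v w|) ≤ M := by linarith
      rw [e]
      calc _ ≤ ‖v‖ * ‖w‖ * M := by gcongr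
        _ = _ := by ring
    · intro v w
      rw [fderiv_zero_of_not_differentiableAt hU2]
      simp; positivity
  refine ContinuousMultilinearMap.opNorm_le_bound hM fun m => ?_
  rw [iteratedFDeriv_two_apply, Real.norm_eq_abs, Fin.prod_univ_two, ← mul_assoc]
  exact key _ _

/-- there is `C₂ = C₂(N) > 0` so that for `u₀ ∈ 𝒱𝒯₁⁺(τ₀)` and its heat flow
`U(t,·) = H_t u₀`: (i) `U + √τ₀ |∇U| ≤ C₂ τ₀^{-N/2}` for all `t ≥ 0`, and
(ii) `|∇²U(t,·)| ≤ C₂ τ₀⁻¹ t^{-N/2}` for all `t > 0`. -/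
theorem statement_6 (N : ℕ) (hN : 1 ≤ N) :
    ∃ C₂ : ℝ, 0 < C₂ ∧
      ∀ τ₀ : ℝ, 0 < τ₀ → ∀ u₀ : E N → ℝ, VT N τ₀ u₀ →
        (∀ t : ℝ, 0 ≤ t → ∀ x : E N,
          heatFlow N u₀ t x + Real.sqrt τ₀ * ‖gradient (heatFlow N u₀ t) x‖ ≤
            C₂ * τ₀ ^ (-(N : ℝ) / 2)) ∧
        (∀ t : ℝ, 0 < t → ∀ x : E N,
          ‖iteratedFDeriv ℝ 2 (heatFlow N u₀ t) x‖ ≤ C₂ * τ₀⁻¹ * t ^ (-(N : ℝ) / 2)) := by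
  refine ⟨2, by norm_num, fun T hT u hu => ⟨fun t ht x => ?_, fun t ht x => ?_⟩⟩
  · have hg : ‖gradient (heatFlow N u t) x‖ = ‖fderiv ℝ (heatFlow N u t) x‖ := by
      simp [gradient]
    rw [hg]
    rcases ht.eq_or_lt with h0 | h0
    · have e : heatFlow N u t = u := by
        funext y; simp [heatFlow, ← h0]
      rw [e]
      linarith [sup_bd N T hT u hu x, grad_bd N T hT u hu x]
    · linarith [(flow_diff N T hT u hu t h0).2 x, (flow_bds N T hT u hu t h0 x).2.1]
  · refine (hess_bd (heatFlow N u t) ((4 * Real.pi * t) ^ (-(N : ℝ) / 2) / (2 * T)) (by positivity)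
      (flow_diff N T hT u hu t ht).1 x (second_diff N T hT u hu t ht x)).trans ?_
    have h1 := pow_cmp N t ht
    have h2 : (0:ℝ) ≤ t ^ (-(N : ℝ) / 2) := by positivity
    have h3 : (0:ℝ) ≤ T⁻¹ := by positivity
    calc _ = T⁻¹ * ((4 * Real.pi * t) ^ (-(N : ℝ) / 2) / 2) := by field_simp
      _ ≤ T⁻¹ * (2 * t ^ (-(N : ℝ) / 2)) := by gcongr; linarith
      _ = _ := by ring
end
end

section
/- Let τ₀ > 0, u₀ ∈ VT₁⁺(τ₀), and let U(t,·) = H_t u₀ be the heat flow of u₀. Then for every t ≥ 0, U(t,·) ∈ VT₁⁺(τ₀ + t); in particular U(t,·) is positive, C², has unit mass, and satisfies 2(τ₀+t)·Hess(log U(t,·))(x)(v,v) + |v|² ≥ 0 for all x, v ∈ ℝ^N. -/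
open MeasureTheory Filter Metric
open scoped ENNReal NNReal Topology

noncomputable section

lemma aux_logconvex_int {α : Type*} [MeasurableSpace α] {μ : Measure α} (h1 h2 h3 : α → ℝ)
    (p1 : ∀ z, 0 < h1 z) (p2 : ∀ z, 0 < h2 z) (p3 : ∀ z, 0 < h3 z)
    (i1 : Integrable h1 μ) (i2 : Integrable h2 μ) (i3 : Integrable h3 μ)
    (q1 : 0 < ∫ z, h1 z ∂μ) (q2 : 0 < ∫ z, h2 z ∂μ) (q3 : 0 < ∫ z, h3 z ∂μ)
    (s : ℝ) (hs0 : 0 ≤ s) (hs1 : s ≤ 1)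
    (h : ∀ z, Real.log (h3 z) ≤ (1 - s) * Real.log (h1 z) + s * Real.log (h2 z)) :
    Real.log (∫ z, h3 z ∂μ) ≤ (1 - s) * Real.log (∫ z, h1 z ∂μ) + s * Real.log (∫ z, h2 z ∂μ) := by
  set A := ∫ z, h1 z ∂μ with hA
  set B := ∫ z, h2 z ∂μ with hB
  set D := (1 - s) * Real.log A + s * Real.log B with hD
  rw [Real.log_le_iff_le_exp q3]
  have key : ∀ z, h3 z ≤ Real.exp D * ((1 - s) * (h1 z / A) + s * (h2 z / B)) := by
    intro z
    have e1 := (Real.log_le_iff_le_exp (p3 z)).1 (h z)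
    have e2 : (1 - s) * Real.log (h1 z) + s * Real.log (h2 z)
        = D + ((1 - s) * Real.log (h1 z / A) + s * Real.log (h2 z / B)) := by
      rw [Real.log_div (p1 z).ne' q1.ne', Real.log_div (p2 z).ne' q2.ne', hD]; ring
    rw [e2, Real.exp_add] at e1
    refine e1.trans ?_
    gcongr
    have := convexOn_exp.2 (Set.mem_univ (Real.log (h1 z / A))) (Set.mem_univ (Real.log (h2 z / B)))
      (sub_nonneg.2 hs1) hs0 (by ring)
    simp only [smul_eq_mul] at this
    rwa [Real.exp_log (div_pos (p1 z) q1), Real.exp_log (div_pos (p2 z) q2)] at this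
  have i4 : Integrable (fun z => (1 - s) * (h1 z / A)) μ := (i1.div_const A).const_mul _
  have i5 : Integrable (fun z => s * (h2 z / B)) μ := (i2.div_const B).const_mul _
  calc ∫ z, h3 z ∂μ ≤ ∫ z, Real.exp D * ((1 - s) * (h1 z / A) + s * (h2 z / B)) ∂μ :=
        integral_mono i3 ((i4.add i5).const_mul _) key
    _ = Real.exp D := by
        rw [integral_const_mul, integral_add i4 i5, integral_const_mul, integral_const_mul,
          integral_div, integral_div, ← hA, ← hB, div_self q1.ne', div_self q2.ne']
        ring

lemma aux_line {N : ℕ} {f : E N → ℝ} (hf : ContDiff ℝ 2 f) (k : ℝ) (x v : E N) :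
    (∀ s, HasDerivAt (fun s : ℝ => f (x + s • v) + k * ‖x + s • v‖ ^ 2)
      (fderiv ℝ f (x + s • v) v + k * (2 * inner ℝ x v + 2 * s * ‖v‖ ^ 2)) s) ∧
    (∀ s, HasDerivAt (fun s : ℝ => fderiv ℝ f (x + s • v) v + k * (2 * inner ℝ x v + 2 * s * ‖v‖ ^ 2))
      (iteratedFDeriv ℝ 2 f (x + s • v) ![v, v] + 2 * k * ‖v‖ ^ 2) s) := by
  have hl : ∀ s : ℝ, HasDerivAt (fun s : ℝ => x + s • v) v s := by
    intro s
    simpa using ((hasDerivAt_id s).smul_const v).const_add x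
  constructor
  · intro s
    have h1 : HasDerivAt (fun s : ℝ => f (x + s • v)) (fderiv ℝ f (x + s • v) v) s :=
      ((hf.differentiable (by norm_num)) (x + s • v)).hasFDerivAt.comp_hasDerivAt s (hl s)
    have h2 : (fun s : ℝ => k * ‖x + s • v‖ ^ 2)
        = fun s : ℝ => k * (‖x‖ ^ 2 + 2 * inner ℝ x v * s + ‖v‖ ^ 2 * s ^ 2) := by
      funext s
      rw [norm_add_sq_real, inner_smul_right, norm_smul, mul_pow, Real.norm_eq_abs, sq_abs]; ring
    have h3 : HasDerivAt (fun s : ℝ => k * ‖x + s • v‖ ^ 2)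
        (k * (2 * inner ℝ x v + 2 * s * ‖v‖ ^ 2)) s := by
      rw [h2]
      have := ((((hasDerivAt_id s).const_mul (2 * inner ℝ x v)).const_add (‖x‖ ^ 2)).add
        (((hasDerivAt_id s).pow 2).const_mul (‖v‖ ^ 2))).const_mul k
      refine this.congr_deriv ?_
      norm_num; left; ring
    exact h1.add h3
  · intro s
    have hd : ContDiff ℝ 1 (fderiv ℝ f) := hf.fderiv_right (by norm_num)
    have h1 : HasDerivAt (fun s : ℝ => fderiv ℝ f (x + s • v))
        (fderiv ℝ (fderiv ℝ f) (x + s • v) v) s :=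
      ((hd.differentiable (by norm_num)) (x + s • v)).hasFDerivAt.comp_hasDerivAt s (hl s)
    have h2 := h1.clm_apply (hasDerivAt_const s v)
    have h3 : HasDerivAt (fun s : ℝ => k * (2 * inner ℝ x v + 2 * s * ‖v‖ ^ 2))
        (2 * k * ‖v‖ ^ 2) s := by
      have := ((((hasDerivAt_id s).const_mul 2).mul_const (‖v‖ ^ 2)).const_add
        (2 * inner ℝ x v)).const_mul k
      refine this.congr_deriv ?_
      simp; ring
    have h4 := h2.add h3
    refine h4.congr_deriv ?_
    rw [iteratedFDeriv_two_apply]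
    simp

lemma aux_fwd {N : ℕ} {f : E N → ℝ} (hf : ContDiff ℝ 2 f) (k : ℝ)
    (h : ∀ x v : E N, 0 ≤ iteratedFDeriv ℝ 2 f x ![v, v] + 2 * k * ‖v‖ ^ 2)
    (x v : E N) : ConvexOn ℝ Set.univ (fun s : ℝ => f (x + s • v) + k * ‖x + s • v‖ ^ 2) := by
  obtain ⟨h1, h2⟩ := aux_line hf k x v
  have e1 : deriv (fun s : ℝ => f (x + s • v) + k * ‖x + s • v‖ ^ 2) =
    (fun s : ℝ => fderiv ℝ f (x + s • v) v + k * (2 * inner ℝ x v + 2 * s * ‖v‖ ^ 2)) :=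
    funext fun s => (h1 s).deriv
  apply convexOn_univ_of_deriv2_nonneg
  · exact fun s => (h1 s).differentiableAt
  · rw [e1]; exact fun s => (h2 s).differentiableAt
  · intro s
    simp only [Function.iterate_succ, Function.iterate_zero, Function.comp_apply, id]
    rw [e1, (h2 s).deriv]
    exact h _ _

lemma aux_bwd {N : ℕ} {f : E N → ℝ} (hf : ContDiff ℝ 2 f) (k : ℝ) (x v : E N)
    (h : ConvexOn ℝ Set.univ (fun s : ℝ => f (x + s • v) + k * ‖x + s • v‖ ^ 2)) :
    0 ≤ iteratedFDeriv ℝ 2 f x ![v, v] + 2 * k * ‖v‖ ^ 2 := by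
  obtain ⟨h1, h2⟩ := aux_line hf k x v
  have e1 : deriv (fun s : ℝ => f (x + s • v) + k * ‖x + s • v‖ ^ 2) =
    (fun s : ℝ => fderiv ℝ f (x + s • v) v + k * (2 * inner ℝ x v + 2 * s * ‖v‖ ^ 2)) :=
    funext fun s => (h1 s).deriv
  have hm := h.monotoneOn_deriv (fun s _ => (h1 s).differentiableAt)
  rw [monotoneOn_univ, e1] at hm
  have := hm.deriv_nonneg (x := 0)
  rw [(h2 0).deriv] at this
  simpa using this

lemma aux_cont {N : ℕ} {F : Type*} [NormedAddCommGroup F] [NormedSpace ℝ F]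
    {u : E N → ℝ} (hu : Integrable u) {K : E N → F} (hK : Continuous K) (B : ℝ)
    (hB : ∀ x, ‖K x‖ ≤ B) : Continuous (fun x => ∫ y, u y • K (x - y)) := by
  apply continuous_of_dominated (bound := fun y => ‖u y‖ * B)
  · intro x
    exact hu.1.smul (by fun_prop : Continuous fun y => K (x - y)).aestronglyMeasurable
  · intro x
    refine Eventually.of_forall fun y => ?_
    rw [norm_smul]; gcongr; exact hB _
  · exact hu.norm.mul_const B
  · refine Eventually.of_forall fun y => ?_
    fun_prop

lemma aux_diff {N : ℕ} {F : Type*} [NormedAddCommGroup F] [NormedSpace ℝ F]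
    {u : E N → ℝ} (hu : Integrable u) {K : E N → F} (hK : ContDiff ℝ 1 K) (B B' : ℝ)
    (hB : ∀ x, ‖K x‖ ≤ B) (hB' : ∀ x, ‖fderiv ℝ K x‖ ≤ B') (x : E N) :
    HasFDerivAt (fun x => ∫ y, u y • K (x - y)) (∫ y, u y • fderiv ℝ K (x - y)) x := by
  have hc := hK.continuous
  have hc' := hK.continuous_fderiv (by norm_num)
  apply hasFDerivAt_integral_of_dominated_of_fderiv_le (s := Set.univ)
    (F' := fun x y => u y • fderiv ℝ K (x - y)) (bound := fun y => ‖u y‖ * B') univ_mem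
  · refine Eventually.of_forall fun x => ?_
    exact hu.1.smul (by fun_prop : Continuous fun y => K (x - y)).aestronglyMeasurable
  · refine (hu.norm.mul_const B).mono'
      (hu.1.smul (by fun_prop : Continuous fun y => K (x - y)).aestronglyMeasurable) ?_
    refine Eventually.of_forall fun y => ?_
    rw [norm_smul]; gcongr; exact hB _
  · exact hu.1.smul (by fun_prop : Continuous fun y => fderiv ℝ K (x - y)).aestronglyMeasurable
  · refine Eventually.of_forall fun y x _ => ?_
    rw [norm_smul]; gcongr; exact hB' _
  · exact hu.norm.mul_const B'
  · refine Eventually.of_forall fun y x _ => ?_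
    have h1 := ((hK.differentiable (by norm_num)) (x - y)).hasFDerivAt
    have h2 : HasFDerivAt (fun x : E N => x - y) (ContinuousLinearMap.id ℝ (E N)) x :=
      (hasFDerivAt_id x).sub_const y
    have h3 := (h1.comp x h2).const_smul (u y)
    rw [ContinuousLinearMap.comp_id] at h3
    exact h3

lemma aux_gauss {N : ℕ} (c : ℝ) (hc : 0 < c) :
    ContDiff ℝ 2 (fun x : E N => Real.exp (-c * ‖x‖ ^ 2)) ∧
    (∀ x : E N, ‖Real.exp (-c * ‖x‖ ^ 2)‖ ≤ 1) ∧
    (∃ B, ∀ x : E N, ‖fderiv ℝ (fun x : E N => Real.exp (-c * ‖x‖ ^ 2)) x‖ ≤ B) ∧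
    (∃ B, ∀ x : E N, ‖fderiv ℝ (fderiv ℝ (fun x : E N => Real.exp (-c * ‖x‖ ^ 2))) x‖ ≤ B) := by
  have hsm : ContDiff ℝ 2 (fun x : E N => Real.exp (-c * ‖x‖ ^ 2)) :=
    (contDiff_const.mul (contDiff_norm_sq ℝ)).exp
  have hle : ∀ x : E N, Real.exp (-c * ‖x‖ ^ 2) ≤ 1 := by
    intro x; rw [Real.exp_le_one_iff]; nlinarith [sq_nonneg ‖x‖]
  have hle2 : ∀ x : E N, Real.exp (-c * ‖x‖ ^ 2) * ‖x‖ ^ 2 ≤ 1 / c := by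
    intro x
    have h1 := Real.add_one_le_exp (c * ‖x‖ ^ 2)
    rw [neg_mul, Real.exp_neg, inv_mul_le_iff₀ (Real.exp_pos _), mul_one_div, le_div_iff₀ hc]
    linarith
  set g : E N → ℝ := fun x : E N => Real.exp (-c * ‖x‖ ^ 2) with hg
  let L : E N →L[ℝ] (E N →L[ℝ] ℝ) := (-c * 2) • innerSL ℝ
  have hLx : ∀ x v, L x v = (-c * 2) * inner ℝ x v := fun x v => rfl
  have hL : ∀ x, ‖L x‖ ≤ 2 * c * ‖x‖ := by
    intro x
    refine ContinuousLinearMap.opNorm_le_bound _ (by positivity) fun v => ?_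
    rw [hLx, norm_mul, Real.norm_eq_abs, abs_mul, abs_neg, abs_of_pos hc, abs_two]
    have := norm_inner_le_norm (𝕜 := ℝ) x v
    calc c * 2 * ‖inner ℝ x v‖ ≤ c * 2 * (‖x‖ * ‖v‖) := by gcongr
      _ = _ := by ring
  have hd : ∀ x, HasFDerivAt g (g x • L x) x := by
    intro x
    have := ((hasStrictFDerivAt_norm_sq x).hasFDerivAt.const_mul (-c)).exp
    refine this.congr_fderiv ?_
    ext v
    change Real.exp (-c * ‖x‖ ^ 2) * (-c * (2 • inner ℝ x v)) = g x * L x v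
    rw [hLx, hg]
    simp only [nsmul_eq_mul]
    push_cast
    ring
  have hfd : fderiv ℝ g = fun x => g x • L x := funext fun x => (hd x).fderiv
  have hd2 : ∀ x, HasFDerivAt (fun x => g x • L x) (g x • L + (g x • L x).smulRight (L x)) x :=
    fun x => (hd x).smul L.hasFDerivAt
  have hg0 : ∀ x, 0 < g x := fun x => Real.exp_pos _
  refine ⟨hsm, ?_, ⟨2 * c * (1 + 1 / c), ?_⟩, ⟨‖L‖ + (2 * c) ^ 2 * (1 / c), ?_⟩⟩
  · intro x; rw [Real.norm_eq_abs, abs_of_pos (hg0 x)]; exact hle x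
  · intro x
    rw [hfd]
    simp only [norm_smul, Real.norm_eq_abs, abs_of_pos (hg0 x)]
    have h1 : g x * ‖L x‖ ≤ g x * (2 * c * ‖x‖) := by gcongr; exact hL x
    have h2 : g x * ‖x‖ ≤ 1 + 1 / c := by
      have a1 := hle x
      have a2 := hle2 x
      have : ‖x‖ ≤ 1 + ‖x‖ ^ 2 := by nlinarith [sq_nonneg (‖x‖ - 1), norm_nonneg x]
      calc g x * ‖x‖ ≤ g x * (1 + ‖x‖ ^ 2) := by gcongr
        _ = g x + g x * ‖x‖ ^ 2 := by ring
        _ ≤ _ := add_le_add a1 a2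
    calc g x * ‖L x‖ ≤ 2 * c * (g x * ‖x‖) := by linarith
      _ ≤ _ := by gcongr
  · intro x
    rw [hfd, (hd2 x).fderiv]
    refine (ContinuousLinearMap.opNorm_add_le _ _).trans ?_
    have n1 : ‖g x • L‖ ≤ g x * ‖L‖ := by
      have := ContinuousLinearMap.opNorm_smul_le (g x) L
      rwa [Real.norm_eq_abs, abs_of_pos (hg0 x)] at this
    have n2 : ‖g x • L x‖ = g x * ‖L x‖ := by
      rw [norm_smul (g x) (L x), Real.norm_eq_abs, abs_of_pos (hg0 x)]
    rw [ContinuousLinearMap.norm_smulRight_apply, n2]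
    have a1 : g x ≤ 1 := hle x
    have a2 := hle2 x
    refine add_le_add ?_ ?_
    · exact n1.trans <| mul_le_of_le_one_left (norm_nonneg L) a1
    · calc g x * ‖L x‖ * ‖L x‖ = g x * ‖L x‖ ^ 2 := by ring
        _ ≤ g x * (2 * c * ‖x‖) ^ 2 := by gcongr; exact hL x
        _ = (2 * c) ^ 2 * (g x * ‖x‖ ^ 2) := by ring
        _ ≤ (2 * c) ^ 2 * (1 / c) := mul_le_mul_of_nonneg_left a2 (by positivity)

lemma aux_smooth {N : ℕ} {u : E N → ℝ} (hu : Integrable u) (c : ℝ) (hc : 0 < c) :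
    ContDiff ℝ 2 (fun x => ∫ y, u y • Real.exp (-c * ‖x - y‖ ^ 2)) := by
  obtain ⟨hs, h0, ⟨B1, h1⟩, ⟨B2, h2⟩⟩ := aux_gauss (N := N) c hc
  have hs' := hs.fderiv_right (m := 1) (by norm_num)
  have d1 := aux_diff hu (hs.of_le (by norm_num)) 1 B1 h0 h1
  have d2 := aux_diff hu hs' B1 B2 h1 h2
  have c3 := aux_cont hu (hs'.continuous_fderiv (by norm_num)) B2 h2
  have e1 := funext fun x => (d1 x).fderiv
  have e2 := funext fun x => (d2 x).fderiv
  rw [show (2 : WithTop ℕ∞) = 1 + 1 by norm_num, contDiff_succ_iff_fderiv]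
  refine ⟨fun x => (d1 x).differentiableAt, by simp, ?_⟩
  rw [e1, contDiff_one_iff_fderiv]
  refine ⟨fun x => (d2 x).differentiableAt, ?_⟩
  rw [e2]
  exact c3

lemma aux_pos {N : ℕ} {h : E N → ℝ} (hi : Integrable h) (hp : ∀ x, 0 < h x) :
    0 < ∫ x, h x := by
  rw [integral_pos_iff_support_of_nonneg (fun x => (hp x).le) hi]
  have : Function.support h = Set.univ := by
    ext x; simp [(hp x).ne']
  rw [this]
  exact isOpen_univ.measure_pos _ Set.univ_nonempty

lemma aux_heat {N : ℕ} (τ₀ : ℝ) (hτ₀ : 0 < τ₀) (u₀ : E N → ℝ) (hu₀ : VT N τ₀ u₀)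
    (t : ℝ) (ht : 0 < t) :
    VT N (τ₀ + t) (fun x => ∫ y, u₀ y * heatKernel N t x y) := by
  obtain ⟨hC2, hint, hpos, hmass, hhess⟩ := hu₀
  set C : ℝ := (4 * Real.pi * t) ^ (-(N : ℝ) / 2) with hC
  have hCpos : 0 < C := by rw [hC]; have := Real.pi_pos; positivity
  have hker : ∀ x y : E N, heatKernel N t x y = C * Real.exp (-(1 / (4 * t)) * ‖x - y‖ ^ 2) := by
    intro x y
    rw [heatKernel, ← hC]; congr 2; field_simp
  have hc : 0 < 1 / (4 * t) := by positivity
  have hsm := aux_smooth hint (1 / (4 * t)) hc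
  have hUeq : (fun x => ∫ y, u₀ y * heatKernel N t x y) =
      fun x => C * ∫ y, u₀ y • Real.exp (-(1 / (4 * t)) * ‖x - y‖ ^ 2) := by
    funext x
    rw [← integral_const_mul]
    congr 1; funext y; rw [hker, smul_eq_mul]; ring
  have hsmU : ContDiff ℝ 2 (fun x => ∫ y, u₀ y * heatKernel N t x y) := by
    rw [hUeq]; exact contDiff_const.mul hsm
  have hintk : ∀ x, Integrable (fun y => u₀ y * heatKernel N t x y) := by
    intro x
    have hcont : Continuous (fun y => heatKernel N t x y) := by
      simp only [hker]; fun_prop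
    refine (hint.norm.mul_const C).mono' (hint.1.mul hcont.aestronglyMeasurable) ?_
    refine Eventually.of_forall fun y => ?_
    rw [norm_mul]; gcongr
    rw [hker, Real.norm_eq_abs, abs_of_pos (mul_pos hCpos (Real.exp_pos _))]
    have : Real.exp (-(1 / (4 * t)) * ‖x - y‖ ^ 2) ≤ 1 := by
      rw [Real.exp_le_one_iff]; nlinarith [sq_nonneg ‖x - y‖]
    nlinarith
  have hkpos : ∀ x y, 0 < heatKernel N t x y := by
    intro x y; rw [hker]; positivity
  have hUpos : ∀ x, 0 < ∫ y, u₀ y * heatKernel N t x y := fun x =>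
    aux_pos (hintk x) fun y => mul_pos (hpos y) (hkpos x y)
  -- convolution
  have hGm : ∫ x : E N, C * Real.exp (-(1 / (4 * t)) * ‖x‖ ^ 2) = 1 := by
    rw [integral_const_mul, GaussianFourier.integral_rexp_neg_mul_sq_norm hc, hC]
    have : Real.pi / (1 / (4 * t)) = 4 * Real.pi * t := by field_simp
    rw [this, finrank_euclideanSpace, Fintype.card_fin, ← Real.rpow_add (by have := Real.pi_pos; positivity)]
    rw [show -(N : ℝ) / 2 + (N : ℝ) / 2 = 0 by ring, Real.rpow_zero]
  have hGi : Integrable (fun x : E N => C * Real.exp (-(1 / (4 * t)) * ‖x‖ ^ 2)) := by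
    by_contra hne
    rw [integral_undef hne] at hGm
    norm_num at hGm
  have hconv : (fun x => ∫ y, u₀ y * heatKernel N t x y) =
      convolution u₀ (fun x : E N => C * Real.exp (-(1 / (4 * t)) * ‖x‖ ^ 2))
        (ContinuousLinearMap.mul ℝ ℝ) volume := by
    funext x
    simp only [convolution, ContinuousLinearMap.mul_apply', hker]
  refine ⟨hsmU, ?_, hUpos, ?_, ?_⟩
  · rw [hconv]; exact hint.integrable_convolution _ hGi
  · rw [hconv, integral_convolution _ hint hGi, hmass, hGm]; simp
  · have hT : 0 < τ₀ + t := by positivity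
    set U : E N → ℝ := fun x => ∫ y, u₀ y * heatKernel N t x y with hU
    have hlogU : ContDiff ℝ 2 (fun y => Real.log (U y)) := hsmU.log fun x => (hUpos x).ne'
    have hlog0 : ContDiff ℝ 2 (fun y => Real.log (u₀ y)) := hC2.log fun x => (hpos x).ne'
    suffices H : ∀ x v : E N, ConvexOn ℝ Set.univ
        (fun s : ℝ => Real.log (U (x + s • v)) + 1 / (4 * (τ₀ + t)) * ‖x + s • v‖ ^ 2) by
      intro x v
      have h1 := aux_bwd hlogU _ x v (H x v)
      have h2 := mul_nonneg (by positivity : 0 ≤ 2 * (τ₀ + t)) h1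
      refine h2.trans_eq ?_
      field_simp
      ring
    have H0 : ∀ x v : E N, ConvexOn ℝ Set.univ
        (fun s : ℝ => Real.log (u₀ (x + s • v)) + 1 / (4 * τ₀) * ‖x + s • v‖ ^ 2) := by
      intro x v
      refine aux_fwd hlog0 _ ?_ x v
      intro x v
      have h2 := mul_nonneg (by positivity : 0 ≤ 1 / (2 * τ₀)) (hhess x v)
      refine h2.trans_eq ?_
      field_simp
      ring
    intro x v
    set b : ℝ := τ₀ / (τ₀ + t) with hb
    let h : E N → E N → ℝ := fun x z => Real.exp (1 / (4 * (τ₀ + t)) * ‖x‖ ^ 2) *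
      (u₀ (z + b • x) * heatKernel N t x (z + b • x))
    have hp : ∀ x z, 0 < h x z := fun x z =>
      mul_pos (Real.exp_pos _) (mul_pos (hpos _) (hkpos _ _))
    have hi : ∀ x, Integrable (h x) := fun x =>
      ((hintk x).comp_add_right (b • x)).const_mul _
    have hI : ∀ x, ∫ z, h x z = Real.exp (1 / (4 * (τ₀ + t)) * ‖x‖ ^ 2) * U x := by
      intro x
      rw [hU]
      simp only [h]
      rw [integral_const_mul, integral_add_right_eq_self (fun y => u₀ y * heatKernel N t x y)]
    have hlI : ∀ x, Real.log (∫ z, h x z) = Real.log (U x) + 1 / (4 * (τ₀ + t)) * ‖x‖ ^ 2 := by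
      intro x
      rw [hI, Real.log_mul (Real.exp_pos _).ne' (hUpos x).ne', Real.log_exp, add_comm]
    have hlh : ∀ x z, Real.log (h x z) = Real.log C + (Real.log (u₀ (z + b • x)) +
        1 / (4 * τ₀) * ‖z + b • x‖ ^ 2) - (1 / (4 * τ₀) + 1 / (4 * t)) * ‖z‖ ^ 2 := by
      intro x z
      simp only [h]
      rw [hker, Real.log_mul (Real.exp_pos _).ne' (by have := hpos (z + b • x); positivity),
        Real.log_mul (hpos _).ne' (by positivity), Real.log_mul hCpos.ne' (Real.exp_pos _).ne',
        Real.log_exp, Real.log_exp]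
      have e1 : ‖z + b • x‖ ^ 2 = ‖z‖ ^ 2 + 2 * b * inner ℝ z x + b ^ 2 * ‖x‖ ^ 2 := by
        rw [norm_add_sq_real, inner_smul_right, norm_smul, mul_pow, Real.norm_eq_abs, sq_abs]; ring
      have e2 : ‖x - (z + b • x)‖ ^ 2 =
          ‖z‖ ^ 2 - 2 * (1 - b) * inner ℝ z x + (1 - b) ^ 2 * ‖x‖ ^ 2 := by
        rw [show x - (z + b • x) = (1 - b) • x - z by rw [sub_smul, one_smul]; abel,
          norm_sub_sq_real, inner_smul_left, norm_smul, mul_pow, Real.norm_eq_abs, sq_abs,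
          real_inner_comm]
        simp; ring
      rw [e1, e2, hb]
      field_simp
      ring
    refine ⟨convex_univ, ?_⟩
    intro p _ q _ α β hα hβ hαβ
    have hα' : α = 1 - β := by linarith
    subst hα'
    simp only [smul_eq_mul]
    rw [← hlI, ← hlI, ← hlI]
    refine aux_logconvex_int _ _ _ (hp _) (hp _) (hp _) (hi _) (hi _) (hi _)
      (aux_pos (hi _) (hp _)) (aux_pos (hi _) (hp _)) (aux_pos (hi _) (hp _)) β hβ (by linarith) ?_
    intro z
    have k := (H0 (z + b • x) (b • v)).2 (Set.mem_univ p) (Set.mem_univ q) hα hβ hαβ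
    simp only [smul_eq_mul] at k
    have e : ∀ s : ℝ, z + b • x + s • b • v = z + b • (x + s • v) := by
      intro s; rw [smul_add, smul_comm s b v, add_assoc]
    rw [e, e, e] at k
    rw [hlh, hlh, hlh]
    linarith

/-- the heat flow of `u₀ ∈ 𝒱𝒯₁⁺(τ₀)` satisfies `U(t,·) ∈ 𝒱𝒯₁⁺(τ₀+t)` for all
`t ≥ 0` (positivity, `C²`, unit mass and `2(τ₀+t)·Hess(log U)(x)(v,v) + |v|² ≥ 0` are all
part of the definition of `VT`). -/
theorem statement_7 (N : ℕ) (τ₀ : ℝ) (hτ₀ : 0 < τ₀) (u₀ : E N → ℝ) (hu₀ : VT N τ₀ u₀)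
    (t : ℝ) (ht : 0 ≤ t) :
    VT N (τ₀ + t) (heatFlow N u₀ t) := by
  rcases ht.eq_or_lt with h | h
  · subst h
    have : heatFlow N u₀ 0 = u₀ := by funext x; simp [heatFlow]
    rw [this, add_zero]; exact hu₀
  · have : heatFlow N u₀ t = fun x => ∫ y, u₀ y * heatKernel N t x y := by
      funext x; simp [heatFlow, h.ne']
    rw [this]; exact aux_heat τ₀ hτ₀ u₀ hu₀ t h
end
end

section
/- Let μ be a Borel measure on ℝ^N and n ≥ 1 an integer. (i) For every p ∈ ℝ^N and every R > 0, μ(B_R(p)) ≤ e^π λ_CM^n[μ] R^n. (ii) Conversely, if there is Θ ≥ 1 such that μ(B_R(p)) ≤ Θ ω_n R^n for all p ∈ ℝ^N and R > 0, where ω_n is the Lebesgue volume of the unit ball in ℝ^n, then λ_CM^n[μ] ≤ Θ. -/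
open MeasureTheory Filter Metric
open scoped ENNReal NNReal Topology

noncomputable section

theorem gauss_level (M : ℕ) (x₀ : E M) (ρ t : ℝ) (hρ : 0 < ρ) (h0 : 0 < t) (h1 : t < 1) :
    {x : E M | t < Real.exp (-‖x - x₀‖ ^ 2 / (4 * ρ))} =
      Metric.ball x₀ (Real.sqrt (4 * ρ * (-Real.log t))) := by
  ext x
  have hl : Real.log t < 0 := Real.log_neg h0 h1
  rw [Set.mem_setOf_eq, Metric.mem_ball, dist_eq_norm, Real.lt_sqrt (norm_nonneg _),
    ← Real.log_lt_iff_lt_exp h0, lt_div_iff₀ (by positivity)]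
  constructor <;> intro h <;> linarith

theorem gauss_lintegral (n : ℕ) (ρ : ℝ) (hρ : 0 < ρ) :
    ∫⁻ x : E n, ENNReal.ofReal (Real.exp (-‖x - 0‖ ^ 2 / (4 * ρ))) =
      ENNReal.ofReal ((4 * Real.pi * ρ) ^ ((n : ℝ) / 2)) := by
  have hb : 0 < 1 / (4 * ρ) := by positivity
  have h := GaussianFourier.integral_rexp_neg_mul_sq_norm (V := E n) hb
  have e : ∀ x : E n, Real.exp (-‖x - 0‖ ^ 2 / (4 * ρ)) =
      Real.exp (-(1 / (4 * ρ)) * ‖x‖ ^ 2) := by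
    intro x; rw [sub_zero]; congr 1; field_simp
  have hpos : 0 < (Real.pi / (1 / (4 * ρ))) ^ ((Module.finrank ℝ (E n) : ℝ) / 2) := by
    positivity
  have hi : Integrable (fun x : E n => Real.exp (-(1 / (4 * ρ)) * ‖x‖ ^ 2)) := by
    by_contra hc
    rw [integral_undef hc] at h
    linarith
  simp_rw [e]
  rw [← ofReal_integral_eq_lintegral_ofReal hi (ae_of_all _ fun x => (Real.exp_pos _).le), h]
  congr 2
  · field_simp
  · simp

/-- (i) `μ(B_R(p)) ≤ e^π λ_CM^n[μ] R^n`; (ii) if `μ(B_R(p)) ≤ Θ ω_n R^n`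
for all `p`, `R > 0` (with `ω_n` the volume of the unit ball in `ℝ^n`), then
`λ_CM^n[μ] ≤ Θ`. -/
theorem statement_8 (N n : ℕ) (hn : 1 ≤ n) (μ : Measure (E N)) :
    (∀ (p : E N) (R : ℝ), 0 < R →
        μ (Metric.ball p R) ≤ ENNReal.ofReal (Real.exp Real.pi * R ^ n) * lamCM n μ) ∧
      ∀ Θ : ℝ, 1 ≤ Θ →
        (∀ (p : E N) (R : ℝ), 0 < R →
          μ (Metric.ball p R) ≤
            ENNReal.ofReal (Θ * (volume (Metric.ball (0 : E n) 1)).toReal * R ^ n)) →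
        lamCM n μ ≤ ENNReal.ofReal Θ := by
  constructor
  · intro p R hR
    have hpi := Real.pi_pos
    have hρ : 0 < R ^ 2 / (4 * Real.pi) := by positivity
    have hle : ENNReal.ofReal ((4 * Real.pi * (R ^ 2 / (4 * Real.pi))) ^ (-(n : ℝ) / 2)) *
        ∫⁻ x, ENNReal.ofReal (Real.exp (-‖x - p‖ ^ 2 / (4 * (R ^ 2 / (4 * Real.pi))))) ∂μ
        ≤ lamCM n μ := by
      unfold lamCM
      exact le_iSup_of_le _ (le_iSup_of_le hρ (le_iSup_of_le p le_rfl))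
    have e1 : (4 * Real.pi * (R ^ 2 / (4 * Real.pi))) ^ (-(n : ℝ) / 2) = (R ^ n)⁻¹ := by
      rw [show 4 * Real.pi * (R ^ 2 / (4 * Real.pi)) = R ^ 2 by field_simp,
        ← Real.rpow_natCast R 2, ← Real.rpow_mul hR.le, ← Real.rpow_natCast R n,
        ← Real.rpow_neg hR.le]
      congr 1
      push_cast
      ring
    have h2 : ENNReal.ofReal (Real.exp (-Real.pi)) * μ (Metric.ball p R) ≤
        ∫⁻ x, ENNReal.ofReal (Real.exp (-‖x - p‖ ^ 2 / (4 * (R ^ 2 / (4 * Real.pi))))) ∂μ := by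
      rw [← setLIntegral_const]
      refine le_trans (setLIntegral_mono' measurableSet_ball fun x hx => ?_)
        (setLIntegral_le_lintegral _ _)
      apply ENNReal.ofReal_le_ofReal
      apply Real.exp_le_exp.2
      rw [Metric.mem_ball, dist_eq_norm] at hx
      rw [le_div_iff₀ (by positivity)]
      have : ‖x - p‖ ^ 2 ≤ R ^ 2 := pow_le_pow_left₀ (norm_nonneg _) hx.le 2
      have e : -Real.pi * (4 * (R ^ 2 / (4 * Real.pi))) = - R ^ 2 := by field_simp
      linarith
    rw [e1] at hle
    have hRn : 0 < R ^ n := by positivity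
    calc μ (Metric.ball p R)
        = ENNReal.ofReal (Real.exp Real.pi * R ^ n) * (ENNReal.ofReal ((R ^ n)⁻¹) *
          (ENNReal.ofReal (Real.exp (-Real.pi)) * μ (Metric.ball p R))) := by
          rw [← mul_assoc, ← mul_assoc, ← ENNReal.ofReal_mul (by positivity),
            ← ENNReal.ofReal_mul (by positivity)]
          have : Real.exp Real.pi * R ^ n * (R ^ n)⁻¹ * Real.exp (-Real.pi) = 1 := by
            rw [Real.exp_neg]
            have := Real.exp_pos Real.pi
            field_simp
          rw [this]; simp
      _ ≤ _ := by gcongr; exact le_trans (by gcongr) hle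
  · intro Θ hΘ hμ
    unfold lamCM
    refine iSup_le fun ρ => iSup_le fun hρ => iSup_le fun x₀ => ?_
    have hpi := Real.pi_pos
    have key : ∫⁻ x, ENNReal.ofReal (Real.exp (-‖x - x₀‖ ^ 2 / (4 * ρ))) ∂μ ≤
        ENNReal.ofReal Θ *
          ∫⁻ x : E n, ENNReal.ofReal (Real.exp (-‖x - 0‖ ^ 2 / (4 * ρ))) := by
      rw [lintegral_eq_lintegral_meas_lt μ (ae_of_all _ fun x => (Real.exp_pos _).le)
          (by fun_prop),
        lintegral_eq_lintegral_meas_lt volume (ae_of_all _ fun x => (Real.exp_pos _).le)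
          (by fun_prop), ← lintegral_const_mul' _ _ ENNReal.ofReal_ne_top]
      refine setLIntegral_mono' measurableSet_Ioi fun t ht => ?_
      have ht : 0 < t := ht
      rcases lt_or_ge t 1 with h1 | h1
      · rw [gauss_level N x₀ ρ t hρ ht h1, gauss_level n 0 ρ t hρ ht h1]
        have hl : Real.log t < 0 := Real.log_neg ht h1
        have hr : 0 < Real.sqrt (4 * ρ * (-Real.log t)) :=
          Real.sqrt_pos.2 (mul_pos (by positivity) (by linarith))
        refine (hμ x₀ _ hr).trans (le_of_eq ?_)
        rw [Measure.addHaar_ball_of_pos volume (0 : E n) hr, mul_assoc,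
          ENNReal.ofReal_mul (by linarith), mul_comm (ENNReal.toReal _),
          ENNReal.ofReal_mul (by positivity), ENNReal.ofReal_toReal measure_ball_lt_top.ne]
        simp
      · have : {x : E N | t < Real.exp (-‖x - x₀‖ ^ 2 / (4 * ρ))} = ∅ := by
          ext x
          simp only [Set.mem_setOf_eq, Set.mem_empty_iff_false, iff_false, not_lt]
          refine le_trans (Real.exp_le_one_iff.2 ?_) h1
          exact div_nonpos_of_nonpos_of_nonneg (by simp) (by positivity)
        rw [this]; simp
    rw [gauss_lintegral n ρ hρ] at key
    calc _ ≤ ENNReal.ofReal ((4 * Real.pi * ρ) ^ (-(n : ℝ) / 2)) *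
          (ENNReal.ofReal Θ * ENNReal.ofReal ((4 * Real.pi * ρ) ^ ((n : ℝ) / 2))) := by gcongr
      _ = ENNReal.ofReal Θ := by
        rw [mul_left_comm, ← ENNReal.ofReal_mul (by positivity),
          ← Real.rpow_add (by positivity)]
        rw [show -(n : ℝ) / 2 + (n : ℝ) / 2 = 0 by ring]
        simp
end
end

section
/- For every N ≥ 1 there is a constant C₃ = C₃(N) ≥ 1 such that for every Borel measure μ on ℝ^N, every integer n ≥ 1, every nonempty open set Ω ⊆ ℝ^N, every T > 0 and every f ∈ VT₁⁺(T), one has (4πT)^{(N-n)/2} ∫_Ω f dμ ≤ C₃ λ_CM^n[μ] ∫_{T_{2√T}(Ω)} f dL^N, where T_r(Ω) = ∪_{p∈Ω} B_r(p) is the r-tubular neighborhood of Ω. -/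
open MeasureTheory Filter Metric
open scoped ENNReal NNReal Topology

noncomputable section

lemma aux_semiconvex {N : ℕ} {T : ℝ} (hT : 0 < T) {f : E N → ℝ} (hf : VT N T f) (p v : E N) :
    2 * (f p * Real.exp (-‖v‖ ^ 2 / (4 * T))) ≤ f (p + v) + f (p - v) := by
  obtain ⟨hC, -, hpos, -, hH⟩ := hf
  set L : E N → ℝ := fun y => Real.log (f y) with hL
  have hLC : ContDiff ℝ 2 L := hC.log (fun x => (hpos x).ne')
  have hd1 : ∀ t : ℝ, HasDerivAt (fun t : ℝ => p + t • v) v t := by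
    intro t
    simpa using ((hasDerivAt_id t).smul_const v).const_add p
  have hdL : ∀ t : ℝ, HasDerivAt (fun t : ℝ => L (p + t • v)) (fderiv ℝ L (p + t • v) v) t := by
    intro t
    exact ((hLC.differentiable (by norm_num)) _).hasFDerivAt.comp_hasDerivAt t (hd1 t)
  have hfd : Differentiable ℝ (fderiv ℝ L) :=
    (hLC.fderiv_right (m := 1) (by norm_num)).differentiable (by norm_num)
  have hdL2 : ∀ t : ℝ, HasDerivAt (fun t : ℝ => fderiv ℝ L (p + t • v) v)
      (fderiv ℝ (fderiv ℝ L) (p + t • v) v v) t := by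
    intro t
    have h := (hfd (p + t • v)).hasFDerivAt.comp_hasDerivAt t (hd1 t)
    exact h.clm_apply (hasDerivAt_const t v) |>.congr_deriv (by simp)
  let c : ℝ := ‖v‖ ^ 2 / (4 * T)
  have hg1 : ∀ t : ℝ, HasDerivAt (fun t : ℝ => L (p + t • v) + t ^ 2 * c)
      (fderiv ℝ L (p + t • v) v + 2 * t * c) t := by
    intro t
    have h := (hdL t).add ((hasDerivAt_pow 2 t).mul_const c)
    exact h.congr_deriv (by simp)
  have hg2 : ∀ t : ℝ, HasDerivAt (fun t : ℝ => fderiv ℝ L (p + t • v) v + 2 * t * c)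
      (fderiv ℝ (fderiv ℝ L) (p + t • v) v v + 2 * c) t := by
    intro t
    have h := (hdL2 t).add (((hasDerivAt_id t).const_mul 2).mul_const c)
    exact h.congr_deriv (by simp)
  have hnn : ∀ t : ℝ, 0 ≤ fderiv ℝ (fderiv ℝ L) (p + t • v) v v + 2 * c := by
    intro t
    have h := hH (p + t • v) v
    rw [iteratedFDeriv_two_apply] at h
    simp only [Matrix.cons_val_zero, Matrix.cons_val_one] at h
    have h2 : fderiv ℝ (fderiv ℝ L) (p + t • v) v v + 2 * c =
      (2 * T * fderiv ℝ (fderiv ℝ L) (p + t • v) v v + ‖v‖ ^ 2) / (2 * T) := by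
      simp only [c]; field_simp; ring
    rw [h2]
    positivity
  have hconv : ConvexOn ℝ Set.univ (fun t : ℝ => L (p + t • v) + t ^ 2 * c) := by
    have e1 : deriv (fun t : ℝ => L (p + t • v) + t ^ 2 * c) =
        fun t => fderiv ℝ L (p + t • v) v + 2 * t * c := funext fun t => (hg1 t).deriv
    refine convexOn_univ_of_deriv2_nonneg (fun t => (hg1 t).differentiableAt) ?_ ?_
    · rw [e1]; exact fun t => (hg2 t).differentiableAt
    · intro t
      simp only [Function.iterate_succ, Function.iterate_zero, Function.comp, id]
      rw [e1, (hg2 t).deriv]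
      exact hnn t
  have hmid := hconv.2 (Set.mem_univ (1:ℝ)) (Set.mem_univ (-1:ℝ))
    (by norm_num : (0:ℝ) ≤ 1/2) (by norm_num : (0:ℝ) ≤ 1/2) (by norm_num)
  simp at hmid
  rw [← sub_eq_add_neg] at hmid
  have hc : -‖v‖ ^ 2 / (4 * T) = - c := by simp only [c]; ring
  rw [hc]
  have hkey : Real.log (f p) - c ≤ (L (p + v) + L (p - v)) / 2 := by
    simp only [hL] at hmid ⊢; linarith
  have h3 : f p * Real.exp (-c) ≤ Real.exp (L (p+v) / 2) * Real.exp (L (p-v)/2) := by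
    rw [← Real.exp_log (hpos p), ← Real.exp_add, ← Real.exp_add]
    exact Real.exp_le_exp.2 (by linarith)
  have h4 : ∀ x, Real.exp (L x / 2) ^ 2 = f x := by
    intro x
    rw [← Real.exp_nat_mul]
    conv_rhs => rw [← Real.exp_log (hpos x)]
    congr 1; simp only [hL]; push_cast; ring
  rw [← h4 (p+v), ← h4 (p-v)]
  nlinarith [sq_nonneg (Real.exp (L (p+v) / 2) - Real.exp (L (p-v)/2))]

lemma aux_mean {N : ℕ} {T : ℝ} (hT : 0 < T) {f : E N → ℝ} (hf : VT N T f) (p : E N) :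
    ENNReal.ofReal (Real.exp (-1)) * volume (ball (0 : E N) (2 * Real.sqrt T)) * ENNReal.ofReal (f p) ≤
      ∫⁻ y, (ball p (2 * Real.sqrt T)).indicator (fun y => ENNReal.ofReal (f y)) y := by
  set r := 2 * Real.sqrt T with hr
  have hr2 : r ^ 2 = 4 * T := by rw [hr, mul_pow, Real.sq_sqrt hT.le]; ring
  have hr0 : 0 ≤ r := by positivity
  set G := (ball p r).indicator (fun y => ENNReal.ofReal (f y)) with hG
  have hfm : Measurable fun y => ENNReal.ofReal (f y) :=
    ENNReal.measurable_ofReal.comp hf.1.continuous.measurable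
  have hGm : Measurable G := hfm.indicator measurableSet_ball
  have h1 : ∫⁻ v, G (p + v) = ∫⁻ y, G y := lintegral_add_left_eq_self G p
  have h2 : ∫⁻ v, G (p - v) = ∫⁻ y, G y := lintegral_sub_left_eq_self G p
  have h3 : ∫⁻ v, (G (p + v) + G (p - v)) = 2 * ∫⁻ y, G y := by
    have hm : Measurable fun v => G (p + v) := hGm.comp (measurable_const_add p)
    rw [lintegral_add_left hm, h1, h2, two_mul]
  have h4 : ∫⁻ v, (ball (0 : E N) r).indicator
      (fun _ => 2 * (ENNReal.ofReal (f p) * ENNReal.ofReal (Real.exp (-1)))) v ≤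
      ∫⁻ v, (G (p + v) + G (p - v)) := by
    refine lintegral_mono fun v => ?_
    by_cases hv : v ∈ ball (0 : E N) r
    · have hv' : ‖v‖ < r := by simpa using hv
      have m1 : p + v ∈ ball p r := by simpa using hv
      have m2 : p - v ∈ ball p r := by simpa [dist_eq_norm] using hv
      simp only [hG, Set.indicator_of_mem hv, Set.indicator_of_mem m1, Set.indicator_of_mem m2]
      rw [← ENNReal.ofReal_add (hf.2.2.1 _).le (hf.2.2.1 _).le,
        ← ENNReal.ofReal_mul (hf.2.2.1 _).le]
      have h22 : (2:ℝ≥0∞) * ENNReal.ofReal (f p * Real.exp (-1)) =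
          ENNReal.ofReal (2 * (f p * Real.exp (-1))) := by
        rw [ENNReal.ofReal_mul (by norm_num : (0:ℝ) ≤ 2)]; simp
      refine h22.trans_le ?_
      refine ENNReal.ofReal_le_ofReal (le_trans ?_ (aux_semiconvex hT hf p v))
      have := (hf.2.2.1 p).le
      gcongr
      rw [le_div_iff₀ (by positivity)]
      nlinarith [norm_nonneg v]
    · simp [Set.indicator_of_notMem hv]
  rw [h3, lintegral_indicator_const measurableSet_ball, mul_assoc] at h4
  have h5 := (ENNReal.mul_le_mul_iff_right (by norm_num) (by norm_num)).1 h4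
  refine le_trans (le_of_eq ?_) h5
  ring

lemma aux_ball {N : ℕ} {T : ℝ} (hT : 0 < T) (n : ℕ) (μ : Measure (E N)) (y : E N) :
    ENNReal.ofReal ((4 * Real.pi * T) ^ (-(n : ℝ) / 2)) * μ (ball y (2 * Real.sqrt T)) ≤
      ENNReal.ofReal (Real.exp 1) * lamCM n μ := by
  set r := 2 * Real.sqrt T with hr
  have hr2 : r ^ 2 = 4 * T := by rw [hr, mul_pow, Real.sq_sqrt hT.le]; ring
  have hr0 : 0 ≤ r := by positivity
  have h1 : ENNReal.ofReal ((4 * Real.pi * T) ^ (-(n : ℝ) / 2)) *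
      ∫⁻ x, ENNReal.ofReal (Real.exp (-‖x - y‖ ^ 2 / (4 * T))) ∂μ ≤ lamCM n μ := by
    unfold lamCM
    exact le_iSup_of_le T (le_iSup_of_le hT (le_iSup_of_le y le_rfl))
  have h2 : μ (ball y r) ≤ ENNReal.ofReal (Real.exp 1) *
      ∫⁻ x, ENNReal.ofReal (Real.exp (-‖x - y‖ ^ 2 / (4 * T))) ∂μ := by
    rw [← lintegral_const_mul' _ _ ENNReal.ofReal_ne_top, ← lintegral_indicator_one measurableSet_ball]
    refine lintegral_mono fun x => ?_
    by_cases hx : x ∈ ball y r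
    · have hx' : ‖x - y‖ < r := by simpa [dist_eq_norm] using hx
      rw [Set.indicator_of_mem hx, ← ENNReal.ofReal_mul (Real.exp_pos _).le, ← Real.exp_add]
      simp only [Pi.one_apply]
      rw [ENNReal.one_le_ofReal]
      apply Real.one_le_exp
      have : -1 ≤ -‖x - y‖ ^ 2 / (4 * T) := by
        rw [le_div_iff₀ (by positivity)]
        nlinarith [norm_nonneg (x - y)]
      linarith
    · simp [Set.indicator_of_notMem hx]
  calc _ ≤ ENNReal.ofReal ((4 * Real.pi * T) ^ (-(n : ℝ) / 2)) * (ENNReal.ofReal (Real.exp 1) *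
      ∫⁻ x, ENNReal.ofReal (Real.exp (-‖x - y‖ ^ 2 / (4 * T))) ∂μ) := by gcongr
    _ = ENNReal.ofReal (Real.exp 1) * (ENNReal.ofReal ((4 * Real.pi * T) ^ (-(n : ℝ) / 2)) *
      ∫⁻ x, ENNReal.ofReal (Real.exp (-‖x - y‖ ^ 2 / (4 * T))) ∂μ) := by ring
    _ ≤ _ := by gcongr

lemma aux_const {N : ℕ} (hN : 1 ≤ N) {T : ℝ} (hT : 0 < T) (n : ℕ) :
    ENNReal.ofReal ((4 * Real.pi * T) ^ (((N : ℝ) - n) / 2)) =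
      ENNReal.ofReal (Real.Gamma ((N : ℝ) / 2 + 1) * Real.exp 1) *
      ENNReal.ofReal ((4 * Real.pi * T) ^ (-(n : ℝ) / 2)) *
      (ENNReal.ofReal (Real.exp (-1)) * volume (ball (0 : E N) (2 * Real.sqrt T))) := by
  haveI : Nonempty (Fin N) := ⟨⟨0, hN⟩⟩
  have hG : 0 < Real.Gamma ((N : ℝ) / 2 + 1) := Real.Gamma_pos_of_pos (by positivity)
  have hp := Real.pi_pos
  rw [EuclideanSpace.volume_ball, Fintype.card_fin, ← ENNReal.ofReal_pow (by positivity),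
    ← ENNReal.ofReal_mul (by positivity), ← ENNReal.ofReal_mul (by positivity),
    ← ENNReal.ofReal_mul (by positivity), ← ENNReal.ofReal_mul (by positivity)]
  congr 1
  have h1 : (4 * Real.pi * T) ^ (((N : ℝ) - n) / 2) =
      (4 * Real.pi * T) ^ (-(n : ℝ) / 2) * (4 * Real.pi * T) ^ ((N : ℝ) / 2) := by
    rw [← Real.rpow_add (by positivity)]; congr 1; ring
  have h2 : (4 * Real.pi * T) ^ ((N : ℝ) / 2) = (2 * √T) ^ N * √Real.pi ^ N := by
    rw [← mul_pow]
    have : 4 * Real.pi * T = (2 * √T * √Real.pi) ^ 2 := by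
      rw [mul_pow, mul_pow, Real.sq_sqrt hT.le, Real.sq_sqrt hp.le]; ring
    rw [this, ← Real.rpow_natCast _ 2, ← Real.rpow_mul (by positivity), ← Real.rpow_natCast _ N]
    congr 1; push_cast; ring
  rw [h1, h2, Real.exp_neg]
  field_simp

/-- there is `C₃ = C₃(N) ≥ 1` so that for every Borel measure `μ`, every
`n ≥ 1`, nonempty open `Ω`, `T > 0` and `f ∈ 𝒱𝒯₁⁺(T)`:
`(4πT)^{(N-n)/2} ∫_Ω f dμ ≤ C₃ λ_CM^n[μ] ∫_{𝒯_{2√T}(Ω)} f dL^N`, where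
`𝒯_r(Ω) = ⋃_{p ∈ Ω} B_r(p)`. -/
theorem statement_9 (N : ℕ) (hN : 1 ≤ N) :
    ∃ C₃ : ℝ, 1 ≤ C₃ ∧
      ∀ (μ : Measure (E N)) (n : ℕ), 1 ≤ n →
        ∀ Ω : Set (E N), IsOpen Ω → Ω.Nonempty →
          ∀ T : ℝ, 0 < T → ∀ f : E N → ℝ, VT N T f →
            ENNReal.ofReal ((4 * Real.pi * T) ^ (((N : ℝ) - n) / 2)) *
                (∫⁻ x in Ω, ENNReal.ofReal (f x) ∂μ) ≤
              ENNReal.ofReal C₃ * lamCM n μ *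
                ∫⁻ x in ⋃ p ∈ Ω, Metric.ball p (2 * Real.sqrt T),
                  ENNReal.ofReal (f x) := by
  refine ⟨max 1 (Real.Gamma ((N : ℝ) / 2 + 1) * Real.exp 1 * Real.exp 1), le_max_left _ _, ?_⟩
  intro μ n hn Ω hΩ hne T hT f hf
  have hr : 0 < 2 * Real.sqrt T := by positivity
  have hfm : Measurable fun y => ENNReal.ofReal (f y) :=
    ENNReal.measurable_ofReal.comp hf.1.continuous.measurable
  set U := ⋃ p ∈ Ω, Metric.ball p (2 * Real.sqrt T) with hU
  have hUo : IsOpen U := isOpen_biUnion fun p _ => isOpen_ball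
  by_cases hlam : lamCM n μ = ⊤
  · have hJ : (∫⁻ x in U, ENNReal.ofReal (f x)) ≠ 0 := by
      have hUne : U.Nonempty := by
        obtain ⟨p, hp⟩ := hne
        exact ⟨p, Set.mem_biUnion hp (mem_ball_self hr)⟩
      have h0 : 0 < ∫⁻ x in U, ENNReal.ofReal (f x) := by
        rw [setLIntegral_pos_iff hfm]
        have : (Function.support fun x => ENNReal.ofReal (f x)) = Set.univ := by
          ext x; simpa using hf.2.2.1 x
        rw [this, Set.univ_inter]
        exact hUo.measure_pos _ hUne
      exact h0.ne'
    have hC : ENNReal.ofReal (max 1 (Real.Gamma ((N : ℝ) / 2 + 1) * Real.exp 1 * Real.exp 1)) ≠ 0 := by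
      rw [Ne, ENNReal.ofReal_eq_zero, not_le]; exact lt_of_lt_of_le one_pos (le_max_left _ _)
    rw [hlam, ENNReal.mul_top hC, ENNReal.top_mul hJ]
    exact le_top
  have hD0 : ENNReal.ofReal ((4 * Real.pi * T) ^ (-(n : ℝ) / 2)) ≠ 0 := by
    have := Real.pi_pos
    rw [Ne, ENNReal.ofReal_eq_zero, not_le]; positivity
  have hloc : IsLocallyFiniteMeasure μ := by
    refine ⟨fun y => ⟨ball y (2 * Real.sqrt T), ball_mem_nhds y hr, ?_⟩⟩
    have h := lt_of_le_of_lt (aux_ball hT n μ y)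
      (ENNReal.mul_lt_top ENNReal.ofReal_lt_top (lt_top_iff_ne_top.2 hlam))
    by_contra hcon
    rw [not_lt, top_le_iff] at hcon
    rw [hcon, ENNReal.mul_top hD0] at h
    exact lt_irrefl _ h
  have hfub : ENNReal.ofReal (Real.exp (-1)) * volume (ball (0 : E N) (2 * Real.sqrt T)) *
      (∫⁻ x in Ω, ENNReal.ofReal (f x) ∂μ) ≤
      ∫⁻ y in U, ENNReal.ofReal (f y) * μ (ball y (2 * Real.sqrt T)) := by
    rw [← lintegral_const_mul _ hfm]
    refine le_trans (lintegral_mono fun p => aux_mean hT hf p) ?_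
    have hjm : Measurable (Function.uncurry fun p y : E N =>
        (ball p (2 * Real.sqrt T)).indicator (fun y => ENNReal.ofReal (f y)) y) := by
      have : (Function.uncurry fun p y : E N =>
        (ball p (2 * Real.sqrt T)).indicator (fun y => ENNReal.ofReal (f y)) y) =
        {q : E N × E N | dist q.2 q.1 < 2 * Real.sqrt T}.indicator
          (fun q => ENNReal.ofReal (f q.2)) := by
        ext ⟨p, y⟩
        simp [Set.indicator, Function.uncurry]
      rw [this]
      refine (hfm.comp measurable_snd).indicator ?_
      exact (isOpen_lt (by fun_prop) (by fun_prop)).measurableSet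
    rw [lintegral_lintegral_swap hjm.aemeasurable, ← lintegral_indicator hUo.measurableSet]
    refine lintegral_mono fun y => ?_
    by_cases hy : y ∈ U
    · rw [Set.indicator_of_mem hy]
      have : ∀ p, (ball p (2 * Real.sqrt T)).indicator (fun y => ENNReal.ofReal (f y)) y =
          (ball y (2 * Real.sqrt T)).indicator (fun _ => ENNReal.ofReal (f y)) p := by
        intro p
        simp [Set.indicator, dist_comm]
      simp_rw [this]
      rw [lintegral_indicator_const measurableSet_ball]
      exact mul_le_mul_right (Measure.restrict_apply_le _ _) _
    · rw [Set.indicator_of_notMem hy, nonpos_iff_eq_zero]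
      refine (setLIntegral_congr_fun hΩ.measurableSet (g := fun _ => 0) ?_).trans (by simp)
      intro p hp
      refine Set.indicator_of_notMem (fun h => hy (Set.mem_biUnion hp h)) _
  set D := ENNReal.ofReal ((4 * Real.pi * T) ^ (-(n : ℝ) / 2)) with hD
  set G := ENNReal.ofReal (Real.Gamma ((N : ℝ) / 2 + 1) * Real.exp 1) with hG
  have hGam : 0 < Real.Gamma ((N : ℝ) / 2 + 1) := Real.Gamma_pos_of_pos (by positivity)
  rw [aux_const hN hT n, mul_assoc]
  calc _ ≤ G * D * ∫⁻ y in U, ENNReal.ofReal (f y) * μ (ball y (2 * Real.sqrt T)) := by gcongr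
    _ = G * ∫⁻ y in U, D * (ENNReal.ofReal (f y) * μ (ball y (2 * Real.sqrt T))) := by
      rw [mul_assoc, lintegral_const_mul' _ _ ENNReal.ofReal_ne_top]
    _ ≤ G * ∫⁻ y in U, (ENNReal.ofReal (Real.exp 1) * lamCM n μ) * ENNReal.ofReal (f y) := by
      refine mul_le_mul_right (lintegral_mono fun y => ?_) _
      calc _ = (D * μ (ball y (2 * Real.sqrt T))) * ENNReal.ofReal (f y) := by ring
        _ ≤ _ := mul_le_mul_left (aux_ball hT n μ y) _
    _ = (G * ENNReal.ofReal (Real.exp 1)) * lamCM n μ * ∫⁻ y in U, ENNReal.ofReal (f y) := by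
      rw [lintegral_const_mul _ hfm]; ring
    _ ≤ _ := by
      rw [hG, ← ENNReal.ofReal_mul (by positivity)]
      gcongr
      exact le_max_right _ _
end
end
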